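/- arXiv:2404.15494 — 2 statements merged into one kernel-verified Lean document; each statement's English description precedes it below -/
import Mathlib

section
/- For every n ≥ 2, the orbit space C_n(ℂ)/(ℂ⋊ℂ*) is simply connected (it is path connected and its fundamental group is trivial). In the paper's notation, M_{0,n+1}/Σ_n is simply connected. -/
open Complex Topology

/-- Ordered configuration space of `n` points in the subset `X ⊆ ℂ`. -/
abbrev OrdConfig (n : ℕ) (X : Set ℂ) : Type :=
  {f : Fin n → ℂ // Function.Injective f ∧ ∀ i, f i ∈ X}

/-- Two ordered configurations are related if they differ by a permutation of labels. -/
def permRel (n : ℕ) (X : Set ℂ) (f g : OrdConfig n X) : Prop :=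
  ∃ σ : Equiv.Perm (Fin n), g.1 = f.1 ∘ σ

/-- The unordered configuration space `C_n(X)` with the quotient topology. -/
abbrev UConfig (n : ℕ) (X : Set ℂ) : Type := Quot (permRel n X)

/-- The affine group relation on unordered configurations: `d` is obtained from `c` by
applying `z ↦ b z + a` with `b ≠ 0` to every point. -/
def affRel (n : ℕ) (c d : UConfig n Set.univ) : Prop :=
  ∃ a b : ℂ, b ≠ 0 ∧ ∃ f g : OrdConfig n Set.univ,
    Quot.mk _ f = c ∧ Quot.mk _ g = d ∧ ∀ i, g.1 i = b * f.1 i + a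

/-- `C_n(ℂ)/(ℂ⋊ℂ*)`, the orbit space with the quotient topology. -/
abbrev ConfigModAff (n : ℕ) : Type := Quot (affRel n)


namespace CMA
open unitInterval Set

section general
variable {X Y X' : Type*} [TopologicalSpace X] [TopologicalSpace Y] [TopologicalSpace X']

/-- naturality of a homotopy along a path, with pointwise descriptions of the four sides -/
lemma square (H : C(X × I, Y)) {x x' : X} (p : Path x x') {y0 y1 y0' y1' : Y}
    (α : Path y0 y0') (β : Path y1 y1') (l : Path y0 y1) (r : Path y0' y1')
    (hα : ∀ t, α t = H (p t, 0)) (hβ : ∀ t, β t = H (p t, 1))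
    (hl : ∀ t, l t = H (x, t)) (hr : ∀ t, r t = H (x', t)) :
    (Path.Homotopic.Quotient.mk α).trans (.mk r) = (Path.Homotopic.Quotient.mk l).trans (.mk β) := by
  let K : C(I × I, Y) := H.comp ((p.toContinuousMap.prodMap (ContinuousMap.id I)))
  obtain rfl : y0 = K (0, 0) := by simpa [K] using hα 0
  obtain rfl : y1 = K (0, 1) := by simpa [K] using hβ 0
  obtain rfl : y0' = K (1, 0) := by simpa [K] using hα 1
  obtain rfl : y1' = K (1, 1) := by simpa [K] using hβ 1
  let u : Path (0 : I) 1 := ⟨ContinuousMap.id I, rfl, rfl⟩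
  have h1 : α = (u.prod (Path.refl 0)).map K.continuous := by
    ext t; simp [hα, K, u]; rfl
  have h2 : β = (u.prod (Path.refl 1)).map K.continuous := by
    ext t; simp [hβ, K, u]; rfl
  have h3 : l = ((Path.refl 0).prod u).map K.continuous := by
    ext t; simp [hl, K, u]; rfl
  have h4 : r = ((Path.refl 1).prod u).map K.continuous := by
    ext t; simp [hr, K, u]; rfl
  rw [h1, h2, h3, h4, ← Path.Homotopic.Quotient.mk_trans, ← Path.Homotopic.Quotient.mk_trans,
    ← Path.map_trans, ← Path.map_trans, Path.Homotopic.Quotient.eq]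
  have : ContractibleSpace I := (convex_Icc (0 : ℝ) 1).contractibleSpace ⟨0, by simp⟩
  exact (SimplyConnectedSpace.paths_homotopic _ _).map K

/-- a map inducing the trivial map on fundamental groups -/
def TM (φ : C(X, Y)) : Prop :=
  ∀ ⦃x x' : X⦄ (p p' : Path x x'), (p.map φ.continuous).Homotopic (p'.map φ.continuous)

lemma TM.comp {φ : C(X, Y)} (h : TM φ) (g : C(X', X)) : TM (φ.comp g) := by
  intro x x' p p'
  exact h (p.map g.continuous) (p'.map g.continuous)

lemma TM.of_homotopic {φ ψ : C(X, Y)} (h : TM φ) (H : φ.Homotopic ψ) : TM ψ := by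
  obtain ⟨H⟩ := H
  intro x x' p p'
  rw [← Path.Homotopic.Quotient.eq]
  let K : C(X × I, Y) := H.toContinuousMap.comp ⟨Prod.swap, continuous_swap⟩
  have key : ∀ p : Path x x', (Path.Homotopic.Quotient.mk (p.map φ.continuous)).trans
      (.mk (H.evalAt x')) = (Path.Homotopic.Quotient.mk (H.evalAt x)).trans
      (.mk (p.map ψ.continuous)) := by
    intro p
    apply square K p
    · intro t; simp [K]
    · intro t; simp [K]
    · intro t; rfl
    · intro t; rfl
  have h1 := key p
  have h2 := key p'
  rw [Path.Homotopic.Quotient.eq.2 (h p p'), h2] at h1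
  have := congrArg (fun z => (Path.Homotopic.Quotient.mk (H.evalAt x)).symm.trans z) h1
  simpa [← Path.Homotopic.Quotient.trans_assoc] using this.symm

lemma TM.const (y : Y) : TM (ContinuousMap.const X y) := by
  intro x x' p p'
  have : p.map (ContinuousMap.const X y).continuous = p'.map (ContinuousMap.const X y).continuous := by
    ext t; rfl
  rw [this]

/-- local to global principle for transport along a path -/
lemma local_global {y y' ys : Y} (γ : Path y y')
    (θ : ∀ t : I, Path.Homotopic.Quotient (γ t) ys)
    (h : ∀ t0 : I, ∃ N ∈ 𝓝 t0, ∀ s t : I, Icc s t ⊆ N → s ≤ t →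
      (Path.Homotopic.Quotient.mk (γ.subpath s t)).trans (θ t) = θ s) :
    (Path.Homotopic.Quotient.mk (γ.subpath 0 1)).trans (θ 1) = θ 0 := by
  choose N hN hθ using h
  obtain ⟨t, ht0, htm, ⟨n, hn⟩, ht⟩ := exists_monotone_Icc_subset_open_cover_unitInterval
    (c := fun t0 => interior (N t0)) (fun _ => isOpen_interior)
    (fun x _ => mem_iUnion.2 ⟨x, mem_interior_iff_mem_nhds.2 (hN x)⟩)
  have key : ∀ k, (Path.Homotopic.Quotient.mk (γ.subpath 0 (t k))).trans (θ (t k)) = θ 0 := by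
    intro k
    induction k with
    | zero =>
      rw [ht0, Path.subpath_self]; simp
    | succ k ih =>
      obtain ⟨i, hi⟩ := ht k
      rw [← ih, ← hθ i (t k) (t (k+1)) (hi.trans interior_subset) (htm (Nat.le_succ k)),
        ← Path.Homotopic.Quotient.trans_assoc, ← Path.Homotopic.Quotient.mk_trans]
      congr 1
      rw [Path.Homotopic.Quotient.eq]
      exact ⟨(Path.Homotopy.subpathTransSubpath γ 0 (t k) (t (k+1))).symm⟩
  have := key n
  rw [hn n le_rfl] at this
  exact this

end general
end CMA


namespace CMA
open unitInterval Set

section family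
variable {Y : Type*} [TopologicalSpace Y] {ι : Type*} [Finite ι]

/-- complement of the graphs of the functions `v j` -/
def VV (v : ℂ → ι → ℂ) : Set (ℂ × ℂ) := {z | ∀ j, z.2 ≠ v z.1 j}

/-- the fibre of `VV v` over `s` -/
abbrev LL (v : ℂ → ι → ℂ) (s : ℂ) : Type := {c : ℂ // ∀ j, c ≠ v s j}

/-- restriction of a map to the fibre -/
noncomputable def fib {v : ℂ → ι → ℂ} (Ψ : C(VV v, Y)) (s : ℂ) : C(LL v s, Y) where
  toFun c := Ψ ⟨(s, c.1), c.2⟩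
  continuous_toFun := by fun_prop

lemma seg_homotopic {v : ℂ → ι → ℂ} (Ψ : C(VV v, Y)) {K : Type*} [TopologicalSpace K]
    {s s' : ℂ} (g : C(K, LL v s)) (g' : C(K, LL v s')) (hg : ∀ k, (g k).1 = (g' k).1)
    (N : Set ℂ) (hN : Convex ℝ N) (hs : s ∈ N) (hs' : s' ∈ N)
    (h : ∀ s'' ∈ N, ∀ k j, (g k).1 ≠ v s'' j) :
    ((fib Ψ s).comp g).Homotopic ((fib Ψ s').comp g') := by
  refine ⟨⟨⟨fun z => Ψ ⟨(s + (z.1 : ℝ) • (s' - s), (g z.2).1), ?_⟩, ?_⟩, ?_, ?_⟩⟩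
  · intro j
    exact h _ (hN.add_smul_sub_mem hs hs' z.1.2) _ _
  · fun_prop
  · intro x
    simp [fib]
  · intro x
    simp [fib, hg]

lemma push_norm (x v : ℂ) (hx : x ≠ v) (R s : ℝ) (hR : ‖x - v‖ < R) (hs : s ∈ Icc (0:ℝ) 1) :
    0 < ‖x + s • ((max 0 (R / ‖x - v‖ - 1)) • (x - v)) - v‖ ∧
    ‖x + s • ((max 0 (R / ‖x - v‖ - 1)) • (x - v)) - v‖ ≤ R ∧
    (s = 1 → ‖x + s • ((max 0 (R / ‖x - v‖ - 1)) • (x - v)) - v‖ = R) := by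
  have h0 : 0 < ‖x - v‖ := norm_pos_iff.2 (sub_ne_zero.2 hx)
  have h1 : 1 < R / ‖x - v‖ := (one_lt_div h0).2 hR
  have e : x + s • ((max 0 (R / ‖x - v‖ - 1)) • (x - v)) - v =
      (1 + s * (R / ‖x - v‖ - 1)) • (x - v) := by
    rw [max_eq_right (by linarith)]
    simp only [Complex.real_smul]; push_cast; ring
  have hnn : 0 ≤ s * (R / ‖x - v‖ - 1) := mul_nonneg hs.1 (by linarith)
  have e2 : ‖x + s • ((max 0 (R / ‖x - v‖ - 1)) • (x - v)) - v‖ = (1 - s) * ‖x - v‖ + s * R := by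
    rw [e, norm_smul, Real.norm_of_nonneg (by linarith)]
    field_simp; ring
  rw [e2]
  obtain ⟨hs0, hs1⟩ := hs
  refine ⟨?_, ?_, ?_⟩
  · rcases hs0.eq_or_lt with h | h
    · rw [← h]; simpa using h0
    · have : 0 < s * R := mul_pos h (h0.trans hR)
      have : 0 ≤ (1 - s) * ‖x - v‖ := mul_nonneg (by linarith) h0.le
      linarith
  · nlinarith
  · rintro rfl; ring

lemma push_sum [Fintype ι] (v : ι → ℂ) (R : ℝ) (hsep : ∀ j k, j ≠ k → 2 * R ≤ ‖v j - v k‖)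
    (x : ℂ) (s : ℝ) :
    (∀ j, R ≤ ‖x - v j‖) ∧ x + s • ∑ j, (max 0 (R / ‖x - v j‖ - 1)) • (x - v j) = x ∨
    ∃ j, ‖x - v j‖ < R ∧ x + s • ∑ j, (max 0 (R / ‖x - v j‖ - 1)) • (x - v j) =
      x + s • ((max 0 (R / ‖x - v j‖ - 1)) • (x - v j)) := by
  have hz : ∀ j, R ≤ ‖x - v j‖ → (max 0 (R / ‖x - v j‖ - 1)) • (x - v j) = 0 := by
    intro j hj
    rcases (norm_nonneg (x - v j)).eq_or_lt with h | h
    · rw [norm_eq_zero.1 h.symm]; simp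
    · rw [max_eq_left, zero_smul]
      have := (div_le_one h).2 hj
      linarith
  by_cases h : ∀ j, R ≤ ‖x - v j‖
  · left
    refine ⟨h, ?_⟩
    rw [Finset.sum_eq_zero (fun j _ => hz j (h j))]; simp
  · right
    push Not at h
    obtain ⟨j, hj⟩ := h
    refine ⟨j, hj, ?_⟩
    rw [Finset.sum_eq_single j]
    · intro k _ hk
      apply hz
      have h1 := hsep j k hk.symm
      have h2 : ‖v j - v k‖ ≤ ‖x - v k‖ + ‖x - v j‖ := by
        have := norm_sub_le (x - v k) (x - v j)
        simpa using this
      linarith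
    · simp

/-- the complement of finitely many points retracts to the complement of discs -/
lemma push (v : ι → ℂ) (R : ℝ) (hR : 0 < R) (hsep : ∀ j k, j ≠ k → 2 * R ≤ ‖v j - v k‖) :
    ∃ ρ : C({c : ℂ // ∀ j, c ≠ v j}, {c : ℂ // ∀ j, c ≠ v j}),
      (∀ c j, R ≤ ‖(ρ c).1 - v j‖) ∧ (ContinuousMap.id _).Homotopic ρ := by
  cases nonempty_fintype ι
  let F : I × {c : ℂ // ∀ j, c ≠ v j} → ℂ := fun z =>
    z.2.1 + (z.1 : ℝ) • ∑ j, (max 0 (R / ‖z.2.1 - v j‖ - 1)) • (z.2.1 - v j)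
  have hF : Continuous F := by
    have : ∀ j, Continuous fun z : I × {c : ℂ // ∀ j, c ≠ v j} => R / ‖z.2.1 - v j‖ := by
      intro j
      apply Continuous.div₀ (by fun_prop) (by fun_prop)
      intro z
      exact (norm_pos_iff.2 (sub_ne_zero.2 (z.2.2 j))).ne'
    fun_prop
  have hother : ∀ j k (y : ℂ), j ≠ k → ‖y - v j‖ ≤ R → R ≤ ‖y - v k‖ := by
    intro j k y hjk hy
    have h1 := hsep j k hjk
    have h2 : ‖v j - v k‖ ≤ ‖y - v k‖ + ‖y - v j‖ := by
      have := norm_sub_le (y - v k) (y - v j)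
      simpa using this
    linarith
  have hmem : ∀ z j, F z ≠ v j := by
    intro z k
    rcases push_sum v R hsep z.2.1 z.1 with ⟨h, e⟩ | ⟨j, h, e⟩
    · simp only [F]; rw [e]; exact z.2.2 k
    · simp only [F]; rw [e]
      obtain ⟨h1, h2, -⟩ := push_norm z.2.1 (v j) (z.2.2 j) R z.1 h z.1.2
      by_cases hjk : j = k
      · subst hjk
        exact sub_ne_zero.1 (norm_pos_iff.1 h1)
      · have := hother j k _ hjk h2
        exact sub_ne_zero.1 (norm_pos_iff.1 (hR.trans_le this))
  have hone : ∀ c k, R ≤ ‖F (1, c) - v k‖ := by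
    intro c k
    rcases push_sum v R hsep c.1 1 with ⟨h, e⟩ | ⟨j, h, e⟩
    · simp only [F]; rw [Set.Icc.coe_one, e]; exact h k
    · simp only [F]; rw [Set.Icc.coe_one, e]
      obtain ⟨h1, h2, h3⟩ := push_norm c.1 (v j) (c.2 j) R 1 h (by simp)
      by_cases hjk : j = k
      · subst hjk
        exact (h3 rfl).ge
      · exact hother j k _ hjk h2
  let H : C(I × {c : ℂ // ∀ j, c ≠ v j}, {c : ℂ // ∀ j, c ≠ v j}) :=
    ⟨fun z => ⟨F z, hmem z⟩, hF.subtype_mk _⟩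
  refine ⟨⟨fun c => H (1, c), by fun_prop⟩, fun c j => hone c j, ⟨⟨H, ?_, ?_⟩⟩⟩
  · intro x
    apply Subtype.ext
    simp [H, F]
  · intro x; rfl

/-- triviality is locally constant where the points stay distinct -/
lemma fib_local {v : ℂ → ι → ℂ} (hv : ∀ j, Continuous fun s => v s j) (Ψ : C(VV v, Y)) (s0 : ℂ)
    (hs0 : Function.Injective (v s0)) :
    ∃ N ∈ 𝓝 s0, ∀ s ∈ N, ∀ s' ∈ N, TM (fib Ψ s) → TM (fib Ψ s') := by
  obtain ⟨R, hR, hsep⟩ : ∃ R : ℝ, 0 < R ∧ ∀ j k, j ≠ k → 4 * R ≤ ‖v s0 j - v s0 k‖ := by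
    have : ∀ᶠ R : ℝ in 𝓝[>] 0, ∀ j k, j ≠ k → 4 * R ≤ ‖v s0 j - v s0 k‖ := by
      rw [Filter.eventually_all]; intro j
      rw [Filter.eventually_all]; intro k
      by_cases hjk : j = k
      · simp [hjk]
      · have hpos : 0 < ‖v s0 j - v s0 k‖ / 4 := by
          have := norm_pos_iff.2 (sub_ne_zero.2 (hs0.ne hjk))
          positivity
        filter_upwards [nhdsWithin_le_nhds (Iio_mem_nhds hpos)] with R hR _
        simp only [mem_Iio] at hR
        linarith
    obtain ⟨R, h1, h2⟩ := (this.and self_mem_nhdsWithin).exists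
    exact ⟨R, h2, h1⟩
  have hev : ∀ᶠ s in 𝓝 s0, ∀ j, ‖v s j - v s0 j‖ < R / 2 := by
    rw [Filter.eventually_all]; intro j
    have : Filter.Tendsto (fun s => ‖v s j - v s0 j‖) (𝓝 s0) (𝓝 0) := by
      have h := ((hv j).sub (continuous_const (y := v s0 j))).norm.tendsto s0
      simpa using h
    exact this.eventually (Iio_mem_nhds (by positivity))
  obtain ⟨ε, hε, hball⟩ := Metric.eventually_nhds_iff_ball.1 hev
  refine ⟨Metric.ball s0 ε, Metric.ball_mem_nhds _ hε, ?_⟩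
  intro s hs s' hs' hT
  obtain ⟨ρ, hρ1, hρ2⟩ := push (v s') R hR (by
    intro j k hjk
    have h1 := hsep j k hjk
    have h2 := hball s' hs' j
    have h3 := hball s' hs' k
    have h4 : ‖v s0 j - v s0 k‖ ≤ ‖v s' j - v s' k‖ + ‖v s' j - v s0 j‖ + ‖v s' k - v s0 k‖ := by
      have e : v s0 j - v s0 k = (v s' j - v s' k) - (v s' j - v s0 j) + (v s' k - v s0 k) := by
        ring
      rw [e]
      exact (norm_add_le _ _).trans (add_le_add (norm_sub_le _ _) le_rfl)
    linarith)
  have hne : ∀ s'' ∈ Metric.ball s0 ε, ∀ k j, (ρ k).1 ≠ v s'' j := by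
    intro s'' hs'' k j heq
    have h1 := hρ1 k j
    rw [heq] at h1
    have h2 := hball s' hs' j
    have h3 := hball s'' hs'' j
    have h4 : ‖v s'' j - v s' j‖ ≤ ‖v s'' j - v s0 j‖ + ‖v s' j - v s0 j‖ := by
      have := norm_sub_le (v s'' j - v s0 j) (v s' j - v s0 j)
      simpa using this
    linarith
  let g : C(LL v s', LL v s) := ⟨fun k => ⟨(ρ k).1, hne s hs k⟩, by fun_prop⟩
  have h1 : TM ((fib Ψ s).comp g) := hT.comp g
  have h2 : ((fib Ψ s).comp g).Homotopic ((fib Ψ s').comp ρ) :=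
    seg_homotopic Ψ g ρ (fun _ => rfl) _ (convex_ball s0 ε) hs hs' hne
  have h3 : ((fib Ψ s').comp (ContinuousMap.id _)).Homotopic ((fib Ψ s').comp ρ) :=
    ContinuousMap.Homotopic.comp (ContinuousMap.Homotopic.refl _) hρ2
  exact (h1.of_homotopic h2).of_homotopic h3.symm

lemma fib_connected {v : ℂ → ι → ℂ} (hv : ∀ j, Continuous fun s => v s j) (Ψ : C(VV v, Y))
    (G : Set ℂ) (hG : IsPreconnected G) (hinj : ∀ s ∈ G, Function.Injective (v s)) (s0 : ℂ)
    (hs0 : s0 ∈ G) (h0 : TM (fib Ψ s0)) : ∀ s ∈ G, TM (fib Ψ s) := by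
  choose! N hN hNT using fun s hs => fib_local hv Ψ s (hinj s hs)
  let A : Set ℂ := ⋃ s ∈ {s ∈ G | TM (fib Ψ s)}, interior (N s)
  let B : Set ℂ := ⋃ s ∈ {s ∈ G | ¬ TM (fib Ψ s)}, interior (N s)
  intro s hs
  by_contra hcon
  have hmem : ∀ s ∈ G, s ∈ interior (N s) := fun s hs => mem_interior_iff_mem_nhds.2 (hN s hs)
  obtain ⟨x, hxG, hxA, hxB⟩ := hG A B
    (isOpen_biUnion fun _ _ => isOpen_interior) (isOpen_biUnion fun _ _ => isOpen_interior)
    (by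
      intro x hx
      by_cases hT : TM (fib Ψ x)
      · left; exact mem_biUnion (show x ∈ {s ∈ G | TM (fib Ψ s)} from ⟨hx, hT⟩) (hmem x hx)
      · right; exact mem_biUnion (show x ∈ {s ∈ G | ¬ TM (fib Ψ s)} from ⟨hx, hT⟩) (hmem x hx))
    ⟨s0, hs0, mem_biUnion (show s0 ∈ {s ∈ G | TM (fib Ψ s)} from ⟨hs0, h0⟩) (hmem s0 hs0)⟩
    ⟨s, hs, mem_biUnion (show s ∈ {s ∈ G | ¬ TM (fib Ψ s)} from ⟨hs, hcon⟩) (hmem s hs)⟩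
  simp only [A, B, mem_iUnion] at hxA hxB
  obtain ⟨a, ⟨haG, haT⟩, hxa⟩ := hxA
  obtain ⟨b, ⟨hbG, hbT⟩, hxb⟩ := hxB
  have h1 := hNT a haG a (mem_of_mem_nhds (hN a haG)) x (interior_subset hxa) haT
  exact hbT (hNT b hbG x (interior_subset hxb) b (mem_of_mem_nhds (hN b hbG)) h1)

lemma fib_dense {v : ℂ → ι → ℂ} (hv : ∀ j, Continuous fun s => v s j) (Ψ : C(VV v, Y))
    (G : Set ℂ) (hG : Dense G) (h0 : ∀ s ∈ G, TM (fib Ψ s)) (s : ℂ) : TM (fib Ψ s) := by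
  intro x y p p'
  let Q : Set ℂ := range (fun t => (p t).1) ∪ range (fun t => (p' t).1)
  have hQ : IsClosed Q := by
    apply IsCompact.isClosed
    exact (isCompact_range (by fun_prop)).union (isCompact_range (by fun_prop))
  have hev : ∀ᶠ s' in 𝓝 s, ∀ j, v s' j ∉ Q := by
    rw [Filter.eventually_all]; intro j
    refine (hv j).continuousAt.eventually (hQ.isOpen_compl.mem_nhds ?_)
    rintro (⟨t, ht⟩ | ⟨t, ht⟩)
    · exact (p t).2 j ht
    · exact (p' t).2 j ht
  obtain ⟨ε, hε, hball⟩ := Metric.eventually_nhds_iff_ball.1 hev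
  obtain ⟨s', hs'G, hs'⟩ := hG.exists_mem_open Metric.isOpen_ball ⟨s, Metric.mem_ball_self hε⟩
  have hQs : ∀ s'' ∈ Metric.ball s ε, ∀ (k : Q) j, k.1 ≠ v s'' j := by
    intro s'' hs'' k j h
    exact hball s'' hs'' j (h ▸ k.2)
  let g : C(Q, LL v s) := ⟨fun k => ⟨k.1, hQs s (Metric.mem_ball_self hε) k⟩, by fun_prop⟩
  let g' : C(Q, LL v s') := ⟨fun k => ⟨k.1, hQs s' hs' k⟩, by fun_prop⟩
  have hT : TM ((fib Ψ s).comp g) := ((h0 s' hs'G).comp g').of_homotopic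
    (seg_homotopic Ψ g' g (fun _ => rfl) _ (convex_ball s ε) hs' (Metric.mem_ball_self hε) hQs)
  let x' : Q := ⟨x.1, Or.inl ⟨0, by simp⟩⟩
  let y' : Q := ⟨y.1, Or.inl ⟨1, by simp⟩⟩
  let P : Path x' y' := ⟨⟨fun t => ⟨(p t).1, Or.inl ⟨t, rfl⟩⟩, by fun_prop⟩,
    by simp [x'], by simp [y']⟩
  let P' : Path x' y' := ⟨⟨fun t => ⟨(p' t).1, Or.inr ⟨t, rfl⟩⟩, by fun_prop⟩,
    by simp [x'], by simp [y']⟩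
  exact hT P P'

end family
end CMA


namespace CMA
open unitInterval Set Polynomial

section polys
variable {m : ℕ}

/-- the polynomial with given roots -/
noncomputable def pr {n : ℕ} (f : Fin n → ℂ) : ℂ[X] := ∏ i, (X - C (f i))

lemma pr_monic {n : ℕ} (f : Fin n → ℂ) : (pr f).Monic := monic_prod_X_sub_C _ _

lemma pr_natDegree {n : ℕ} (f : Fin n → ℂ) : (pr f).natDegree = n := by
  simp [pr]

lemma pr_eval {n : ℕ} (f : Fin n → ℂ) (z : ℂ) : (pr f).eval z = ∏ i, (z - f i) := by
  simp [pr, eval_prod]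

lemma pr_root {n : ℕ} (f : Fin n → ℂ) (z : ℂ) : (pr f).eval z = 0 ↔ ∃ i, f i = z := by
  rw [pr_eval, Finset.prod_eq_zero_iff]
  simp [sub_eq_zero, eq_comm]

lemma pr_sep {n : ℕ} (f : Fin n → ℂ) : (pr f).Separable ↔ Function.Injective f :=
  separable_prod_X_sub_C_iff

lemma exists_pr (n : ℕ) : ∀ p : ℂ[X], p.Monic → p.natDegree = n → ∃ f : Fin n → ℂ, pr f = p := by
  induction n with
  | zero =>
    intro p hp h0
    exact ⟨Fin.elim0, by rw [hp.natDegree_eq_zero.1 h0]; simp [pr]⟩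
  | succ n ih =>
    intro p hp hd
    obtain ⟨z, hz⟩ := IsAlgClosed.exists_root p (by
      rw [degree_eq_natDegree hp.ne_zero, hd]; exact_mod_cast Nat.succ_ne_zero n)
    have hmul := mul_divByMonic_eq_iff_isRoot.2 hz
    set q := p /ₘ (X - C z) with hq
    have hqm : q.Monic := by
      have h : ((X - C z) * q).Monic := by rw [hmul]; exact hp
      exact (monic_X_sub_C z).of_mul_monic_left h
    have hqd : q.natDegree = n := by
      have h := (monic_X_sub_C z).natDegree_mul hqm
      rw [hmul, hd, natDegree_X_sub_C] at h
      omega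
    obtain ⟨f, hf⟩ := ih q hqm hqd
    refine ⟨Fin.cons z f, ?_⟩
    rw [pr, Fin.prod_univ_succ]
    simp only [Fin.cons_zero, Fin.cons_succ]
    rw [← hmul, ← hf, pr]

lemma coeff_prod_continuous {T : Type*} [TopologicalSpace T] {n : ℕ} (F : T → Fin n → ℂ)
    (hF : Continuous F) (k : ℕ) : Continuous fun t => (pr (F t)).coeff k := by
  have hFi : ∀ i, Continuous fun t => F t i := fun i => (continuous_apply i).comp hF
  suffices h : ∀ (s : Finset (Fin n)) (k : ℕ),
      Continuous fun t => (∏ i ∈ s, (X - C (F t i))).coeff k from h _ k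
  intro s
  induction s using Finset.induction_on with
  | empty => intro k; simp [continuous_const]
  | insert a s ha ih =>
    intro k
    simp only [Finset.prod_insert ha, coeff_mul]
    refine continuous_finsetSum _ fun x _ => ?_
    refine Continuous.mul ?_ (ih _)
    simp only [coeff_sub, coeff_X, coeff_C]
    split_ifs <;> fun_prop

/-- all the coefficients -/
noncomputable def cf (n : ℕ) (f : Fin n → ℂ) : Fin n → ℂ := fun i => (pr f).coeff i

lemma cf_continuous (n : ℕ) : Continuous (cf n) :=
  continuous_pi fun i => coeff_prod_continuous _ continuous_id _

lemma cf_bound {n : ℕ} (f : Fin n → ℂ) : ‖f‖ ≤ ‖cf n f‖ + 1 := by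
  refine (pi_norm_le_iff_of_nonneg (by positivity)).2 fun j => ?_
  have h : (pr f).IsRoot (f j) := (pr_root f (f j)).2 ⟨j, rfl⟩
  have h1 := h.norm_lt_cauchyBound (pr_monic f).ne_zero
  have h2 : cauchyBound (pr f) ≤ ‖cf n f‖₊ + 1 := by
    rw [cauchyBound, (pr_monic f).leadingCoeff, pr_natDegree]
    simp only [nnnorm_one, div_one]
    gcongr
    refine Finset.sup_le fun i hi => ?_
    exact nnnorm_le_pi_nnnorm (cf n f) ⟨i, Finset.mem_range.1 hi⟩
  have h3 := h1.le.trans h2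
  exact_mod_cast h3

lemma cf_closed (n : ℕ) : IsClosedMap (cf n) := by
  apply IsProperMap.isClosedMap
  rw [isProperMap_iff_isCompact_preimage]
  refine ⟨cf_continuous n, fun K hK => ?_⟩
  apply Metric.isCompact_of_isClosed_isBounded (hK.isClosed.preimage (cf_continuous n))
  obtain ⟨B, hB⟩ := hK.isBounded.exists_norm_le
  refine isBounded_iff_forall_norm_le.2 ⟨B + 1, fun f hf => ?_⟩
  have := cf_bound f
  have := hB _ hf
  linarith

/-- monic centred polynomial with lower coefficients `a` -/
noncomputable def pol (a : Fin m → ℂ) : ℂ[X] := X ^ (m + 1) + ∑ i, C (a i) * X ^ (i : ℕ)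

lemma pol_eval (a : Fin m → ℂ) (z : ℂ) : (pol a).eval z = z ^ (m + 1) + ∑ i, a i * z ^ (i : ℕ) := by
  simp [pol, eval_finsetSum]

lemma pol_deriv_eval (a : Fin m → ℂ) (z : ℂ) : (derivative (pol a)).eval z =
    (m + 1) * z ^ m + ∑ i : Fin m, a i * (i : ℕ) * z ^ ((i : ℕ) - 1) := by
  simp [pol, eval_finsetSum, mul_assoc, derivative_X_pow]

lemma pol_coeff_aux (a : Fin m → ℂ) (k : ℕ) : (∑ i, C (a i) * X ^ (i : ℕ) : ℂ[X]).coeff k =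
    if h : k < m then a ⟨k, h⟩ else 0 := by
  simp only [finsetSum_coeff, coeff_C_mul, coeff_X_pow]
  split_ifs with h
  · rw [Finset.sum_eq_single ⟨k, h⟩]
    · simp
    · intro b _ hb
      have : k ≠ b := fun h' => hb (Fin.ext h'.symm)
      simp [this]
    · simp
  · apply Finset.sum_eq_zero
    intro i _
    have : k ≠ i := by omega
    simp [this]

lemma pol_coeff (a : Fin m → ℂ) (k : ℕ) : (pol a).coeff k =
    (if k = m + 1 then 1 else 0) + if h : k < m then a ⟨k, h⟩ else 0 := by
  rw [pol, coeff_add, pol_coeff_aux, coeff_X_pow]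

lemma pol_natDegree (a : Fin m → ℂ) : (pol a).natDegree = m + 1 := by
  refine le_antisymm ?_ ?_
  · rw [natDegree_le_iff_coeff_eq_zero]
    intro N hN
    rw [pol_coeff, if_neg (by omega), dif_neg (by omega), add_zero]
  · apply le_natDegree_of_ne_zero
    simp [pol_coeff]

lemma pol_monic (a : Fin m → ℂ) : (pol a).Monic := by
  rw [Monic, leadingCoeff, pol_natDegree, pol_coeff]; simp

lemma pol_coeff_fin (a : Fin m → ℂ) (i : Fin m) : (pol a).coeff i = a i := by
  rw [pol_coeff, if_neg (by omega), dif_pos i.2, zero_add]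

lemma pol_inj {a b : Fin m → ℂ} (h : pol a = pol b) : a = b := by
  ext i; rw [← pol_coeff_fin a, h, pol_coeff_fin]

lemma pol_of_coeff (p : ℂ[X]) (hp : p.Monic) (hd : p.natDegree = m + 1) (h0 : p.coeff m = 0) :
    pol (fun i : Fin m => p.coeff i) = p := by
  ext k
  rw [pol_coeff]
  rcases lt_trichotomy k m with h | h | h
  · rw [if_neg (by omega), dif_pos h, zero_add]
  · subst h; simp [h0]
  · rw [dif_neg (by omega)]
    by_cases h' : k = m + 1
    · subst h'
      have := hp.leadingCoeff
      rw [leadingCoeff, hd] at this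
      simp [this]
    · rw [if_neg h', coeff_eq_zero_of_natDegree_lt (by omega), add_zero]

lemma pr_coeff_pred (f : Fin (m + 1) → ℂ) : (pr f).coeff m = - ∑ i, f i := by
  have := prod_X_sub_C_coeff_card_pred (Finset.univ : Finset (Fin (m+1))) f (by simp)
  simpa [pr] using this

/-- coefficient vectors of separable polynomials -/
def ZZ (m : ℕ) : Set (Fin m → ℂ) := {a | (pol a).Separable}

lemma mem_ZZ (a : Fin m → ℂ) : a ∈ ZZ m ↔
    ∀ z, (derivative (pol a)).eval z = 0 → (pol a).eval z ≠ 0 := by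
  change IsCoprime _ _ ↔ _
  rw [isCoprime_iff_aeval_ne_zero_of_isAlgClosed ℂ ℂ]
  simp only [coe_aeval_eq_eval]
  refine forall_congr' fun z => ?_
  tauto

/-- the chosen enumeration of the roots -/
lemma exists_rt (a : Fin m → ℂ) : ∃ f : Fin (m + 1) → ℂ, pr f = pol a :=
  exists_pr _ _ (pol_monic a) (pol_natDegree a)

lemma sum_zero_of_pr {a : Fin m → ℂ} {f : Fin (m + 1) → ℂ} (h : pr f = pol a) : ∑ i, f i = 0 := by
  have h1 := pr_coeff_pred f
  rw [h, pol_coeff, if_neg (by omega), dif_neg (by omega)] at h1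
  simpa using h1.symm

/-- extension by zero -/
noncomputable def ex (a : Fin m → ℂ) : Fin (m + 1) → ℂ := fun i => (pol a).coeff i

lemma ex_continuous : Continuous (ex (m := m)) := by
  refine continuous_pi fun i => ?_
  simp only [ex, pol_coeff]
  split_ifs <;> fun_prop

lemma cf_eq_ex {a : Fin m → ℂ} {f : Fin (m + 1) → ℂ} : cf (m + 1) f = ex a ↔ pr f = pol a := by
  constructor
  · intro h
    ext k
    by_cases hk : k < m + 1
    · exact congrFun h ⟨k, hk⟩
    · by_cases hk' : k = m + 1
      · subst hk'
        have h1 := (pr_monic f).leadingCoeff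
        have h2 := (pol_monic a).leadingCoeff
        rw [leadingCoeff, pr_natDegree] at h1
        rw [leadingCoeff, pol_natDegree] at h2
        rw [h1, h2]
      · rw [coeff_eq_zero_of_natDegree_lt, coeff_eq_zero_of_natDegree_lt]
        · rw [pol_natDegree]; omega
        · rw [pr_natDegree]; omega
  · intro h
    ext i
    simp [cf, ex, h]

lemma ZZ_open : IsOpen (ZZ m) := by
  have h : (ZZ m)ᶜ = ex ⁻¹' (cf (m+1) '' {f | ¬ Function.Injective f}) := by
    ext a
    simp only [mem_compl_iff, mem_preimage, mem_image, mem_ofPred_eq]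
    constructor
    · intro ha
      obtain ⟨f, hf⟩ := exists_rt a
      refine ⟨f, ?_, cf_eq_ex.2 hf⟩
      rwa [← pr_sep, hf]
    · rintro ⟨f, hf, hfa⟩
      rw [cf_eq_ex] at hfa
      rw [← pr_sep, hfa] at hf
      exact hf
  rw [← isClosed_compl_iff, h]
  refine IsClosed.preimage ex_continuous (cf_closed _ _ ?_)
  have : {f : Fin (m+1) → ℂ | ¬ Function.Injective f} =
      ⋃ i, ⋃ j, ⋃ (_ : i ≠ j), {f | f i = f j} := by
    ext f
    simp only [Function.Injective, mem_ofPred_eq, mem_iUnion]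
    push Not
    constructor
    · rintro ⟨i, j, h, h'⟩; exact ⟨i, j, h', h⟩
    · rintro ⟨i, j, h', h⟩; exact ⟨i, j, h, h'⟩
  rw [this]
  refine isClosed_iUnion_of_finite fun i => isClosed_iUnion_of_finite fun j =>
    isClosed_iUnion_of_finite fun _ => isClosed_eq (by fun_prop) (by fun_prop)

/-- weighted scaling of coefficients -/
noncomputable def act (l : ℂ) (a : Fin m → ℂ) : Fin m → ℂ := fun i => l ^ (m + 1 - (i : ℕ)) * a i

lemma act_continuous (l : ℂ) : Continuous (act (m := m) l) := by
  unfold act; fun_prop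

lemma act_continuous' : Continuous fun z : ℂ × (Fin m → ℂ) => act z.1 z.2 := by
  unfold act; fun_prop

lemma act_one (a : Fin m → ℂ) : act 1 a = a := by ext; simp [act]

lemma act_act (l l' : ℂ) (a : Fin m → ℂ) : act l (act l' a) = act (l * l') a := by
  ext; simp [act, mul_pow, mul_assoc]

lemma pr_act {l : ℂ} (hl : l ≠ 0) {a : Fin m → ℂ} {f : Fin (m + 1) → ℂ} (h : pr f = pol a) :
    pr (fun i => l * f i) = pol (act l a) := by
  apply Polynomial.funext
  intro z
  have h1 : ∀ z, (∏ i, (z - f i)) = z ^ (m + 1) + ∑ i, a i * z ^ (i : ℕ) := by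
    intro z
    rw [← pr_eval, h, pol_eval]
  rw [pr_eval, pol_eval]
  have h2 : ∀ i, z - l * f i = l * (z / l - f i) := by intro i; field_simp
  simp only [h2, Finset.prod_mul_distrib, h1]
  rw [Finset.prod_const, Finset.card_univ, Fintype.card_fin, mul_add, Finset.mul_sum]
  congr 1
  · rw [← mul_pow, mul_div_cancel₀ _ hl]
  · refine Finset.sum_congr rfl fun i _ => ?_
    simp only [act]
    have : l ^ (m + 1) = l ^ (m + 1 - (i : ℕ)) * l ^ (i : ℕ) := by
      rw [← pow_add]; congr 1; omega
    rw [this, div_pow]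
    field_simp

lemma act_mem {l : ℂ} (hl : l ≠ 0) {a : Fin m → ℂ} (ha : a ∈ ZZ m) : act l a ∈ ZZ m := by
  obtain ⟨f, hf⟩ := exists_rt a
  have hf' : Function.Injective f := by rw [← pr_sep, hf]; exact ha
  change (pol _).Separable
  rw [← pr_act hl hf, pr_sep]
  intro i j hij
  exact hf' (mul_left_cancel₀ hl hij)

/-- the orbit equivalence relation -/
def orb (m : ℕ) : Setoid (ZZ m) where
  r a b := ∃ l : ℂ, l ≠ 0 ∧ b.1 = act l a.1
  iseqv := by
    refine ⟨fun a => ⟨1, one_ne_zero, (act_one _).symm⟩, ?_, ?_⟩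
    · rintro a b ⟨l, hl, h⟩
      refine ⟨l⁻¹, inv_ne_zero hl, ?_⟩
      rw [h, act_act, inv_mul_cancel₀ hl, act_one]
    · rintro a b c ⟨l, hl, h⟩ ⟨l', hl', h'⟩
      exact ⟨l' * l, mul_ne_zero hl' hl, by rw [h', h, act_act]⟩

/-- the orbit space -/
abbrev YY (m : ℕ) : Type := Quotient (orb m)

/-- the projection -/
def qq (m : ℕ) : C(ZZ m, YY m) := ⟨Quotient.mk (orb m), continuous_quotient_mk'⟩

lemma qq_eq {a b : ZZ m} : qq m a = qq m b ↔ ∃ l : ℂ, l ≠ 0 ∧ b.1 = act l a.1 :=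
  Quotient.eq (r := orb m)

lemma qq_openQuotient : IsOpenQuotientMap (qq m) := by
  refine ⟨Quotient.mk_surjective, (qq m).continuous, ?_⟩
  intro U hU
  rw [← (isQuotientMap_quotient_mk' (s := orb m)).isOpen_preimage]
  have : (Quotient.mk (orb m)) ⁻¹' (qq m '' U) =
      ⋃ l : {l : ℂ // l ≠ 0}, (fun a : ZZ m => (⟨act l.1 a.1, act_mem l.2 a.2⟩ : ZZ m)) ⁻¹' U := by
    ext a
    simp only [mem_preimage, mem_image, mem_iUnion]
    constructor
    · rintro ⟨b, hb, hba⟩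
      obtain ⟨l, hl, h⟩ := qq_eq.1 (show qq m a = qq m b from hba.symm)
      refine ⟨⟨l, hl⟩, ?_⟩
      convert! hb
      exact h.symm
    · rintro ⟨l, hl⟩
      exact ⟨_, hl, (qq_eq.2 ⟨l.1, l.2, rfl⟩).symm⟩
  change IsOpen (Quotient.mk (orb m) ⁻¹' _)
  rw [this]
  refine isOpen_iUnion fun l => hU.preimage ?_
  exact ((act_continuous l.1).comp continuous_subtype_val).subtype_mk _

end polys
end CMA


namespace CMA
open unitInterval Set Polynomial

section homeo
variable {m : ℕ}

/-- translate to have barycentre zero -/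
noncomputable def cen (f : Fin (m + 1) → ℂ) : Fin (m + 1) → ℂ :=
  fun i => f i - (∑ j, f j) / (m + 1)

lemma cen_sum (f : Fin (m + 1) → ℂ) : ∑ i, cen f i = 0 := by
  have : (m + 1 : ℂ) ≠ 0 := by exact_mod_cast Nat.succ_ne_zero m
  simp [cen, Finset.sum_sub_distrib]
  field_simp
  simp

lemma cen_self {f : Fin (m + 1) → ℂ} (h : ∑ i, f i = 0) : cen f = f := by
  ext i; simp [cen, h]

lemma cen_inj {f : Fin (m + 1) → ℂ} (h : Function.Injective f) : Function.Injective (cen f) := by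
  intro i j hij
  apply h
  simpa [cen] using hij

lemma cen_aff (f : Fin (m + 1) → ℂ) (a b : ℂ) :
    cen (fun i => b * f i + a) = fun i => b * cen f i := by
  have : (m + 1 : ℂ) ≠ 0 := by exact_mod_cast Nat.succ_ne_zero m
  ext i
  simp [cen, Finset.sum_add_distrib, ← Finset.mul_sum]
  field_simp
  ring

lemma cen_perm (f : Fin (m + 1) → ℂ) (τ : Equiv.Perm (Fin (m + 1))) :
    cen (f ∘ τ) = cen f ∘ τ := by
  ext i
  simp [cen, Equiv.sum_comp τ f]

lemma cen_continuous : Continuous (cen (m := m)) := by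
  unfold cen; fun_prop

lemma pr_perm {n : ℕ} (f : Fin n → ℂ) (τ : Equiv.Perm (Fin n)) : pr (f ∘ τ) = pr f := by
  simp only [pr, Function.comp]
  exact Equiv.prod_comp τ (fun i => X - C (f i))

lemma perm_of_pr {n : ℕ} {f g : Fin n → ℂ} (hf : Function.Injective f) (hg : Function.Injective g)
    (h : pr f = pr g) : ∃ τ : Equiv.Perm (Fin n), g = f ∘ τ := by
  have h1 : ∀ i, ∃ j, f j = g i := by
    intro i
    rw [← pr_root, h, pr_root]
    exact ⟨i, rfl⟩
  choose s hs using h1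
  have hinj : Function.Injective s := by
    intro i j hij
    apply hg
    rw [← hs, ← hs, hij]
  refine ⟨Equiv.ofBijective s (Finite.injective_iff_bijective.1 hinj), ?_⟩
  ext i
  simp [hs]

/-- centred coefficients -/
noncomputable def rr (f : Fin (m + 1) → ℂ) : Fin m → ℂ := fun i => (pr (cen f)).coeff i

lemma pol_rr (f : Fin (m + 1) → ℂ) : pr (cen f) = pol (rr f) := by
  refine (pol_of_coeff _ (pr_monic _) (pr_natDegree _) ?_).symm
  rw [pr_coeff_pred, cen_sum, neg_zero]

lemma rr_mem {f : Fin (m + 1) → ℂ} (h : Function.Injective f) : rr f ∈ ZZ m := by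
  change (pol _).Separable
  rw [← pol_rr, pr_sep]
  exact cen_inj h

lemma rr_continuous : Continuous (rr (m := m)) :=
  continuous_pi fun i => coeff_prod_continuous _ cen_continuous _

lemma rr_perm (f : Fin (m + 1) → ℂ) (τ : Equiv.Perm (Fin (m + 1))) : rr (f ∘ τ) = rr f := by
  ext i; rw [rr, cen_perm, pr_perm, rr]

lemma rr_aff (f : Fin (m + 1) → ℂ) (a : ℂ) {b : ℂ} (hb : b ≠ 0) :
    rr (fun i => b * f i + a) = act b (rr f) := by
  apply pol_inj
  rw [← pol_rr, cen_aff, pr_act hb (pol_rr f)]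

/-- the map on ordered configurations -/
noncomputable def F0 (f : OrdConfig (m + 1) Set.univ) : YY m := qq m ⟨rr f.1, rr_mem f.2.1⟩

lemma F0_perm (f g : OrdConfig (m + 1) Set.univ) (h : permRel (m + 1) Set.univ f g) :
    F0 f = F0 g := by
  obtain ⟨τ, h⟩ := h
  unfold F0
  congr 2
  rw [h, rr_perm]

lemma F0_continuous : Continuous (F0 (m := m)) :=
  (qq m).continuous.comp ((rr_continuous.comp continuous_subtype_val).subtype_mk _)

/-- the map on unordered configurations -/
noncomputable def F1 : UConfig (m + 1) Set.univ → YY m := Quot.lift F0 F0_perm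

lemma F1_aff (c d : UConfig (m + 1) Set.univ) (h : affRel (m + 1) c d) : F1 c = F1 d := by
  obtain ⟨a, b, hb, f, g, rfl, rfl, h⟩ := h
  change F0 f = F0 g
  refine qq_eq.2 ⟨b, hb, ?_⟩
  have : g.1 = fun i => b * f.1 i + a := funext h
  simp only [this]
  exact rr_aff _ _ hb

/-- the map on the orbit space -/
noncomputable def F2 : ConfigModAff (m + 1) → YY m := Quot.lift F1 F1_aff

lemma F2_continuous : Continuous (F2 (m := m)) :=
  Continuous.quotient_lift' F1_aff (Continuous.quotient_lift' F0_perm F0_continuous)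
where
  Continuous.quotient_lift' {A B : Type} [TopologicalSpace A] [TopologicalSpace B]
      {r : A → A → Prop} {f : A → B} (hr : ∀ a b, r a b → f a = f b) (hf : Continuous f) :
      Continuous (Quot.lift f hr) := continuous_quot_lift hr hf

/-- the projection from ordered configurations -/
def pp (f : OrdConfig (m + 1) Set.univ) : ConfigModAff (m + 1) := Quot.mk _ (Quot.mk _ f)

lemma pp_continuous : Continuous (pp (m := m)) := continuous_quot_mk.comp continuous_quot_mk

lemma F2_pp (f : OrdConfig (m + 1) Set.univ) : F2 (pp f) = F0 f := rfl

lemma pp_surj (x : ConfigModAff (m + 1)) : ∃ f, pp f = x := by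
  obtain ⟨y, rfl⟩ := Quot.exists_rep x
  obtain ⟨f, rfl⟩ := Quot.exists_rep y
  exact ⟨f, rfl⟩

lemma pp_perm {f g : OrdConfig (m + 1) Set.univ} (h : permRel (m + 1) Set.univ f g) :
    pp f = pp g := congrArg (Quot.mk _) (Quot.sound h)

lemma pp_aff {f g : OrdConfig (m + 1) Set.univ} {a b : ℂ} (hb : b ≠ 0)
    (h : ∀ i, g.1 i = b * f.1 i + a) : pp f = pp g :=
  Quot.sound ⟨a, b, hb, f, g, rfl, rfl, h⟩

lemma F2_inj : Function.Injective (F2 (m := m)) := by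
  intro x y hxy
  obtain ⟨f, rfl⟩ := pp_surj x
  obtain ⟨g, rfl⟩ := pp_surj y
  rw [F2_pp, F2_pp] at hxy
  obtain ⟨l, hl, h⟩ := qq_eq.1 hxy
  change rr g.1 = act l (rr f.1) at h
  have h1 : pr (fun i => l * cen f.1 i) = pr (cen g.1) := by
    rw [pol_rr g.1, h, pr_act hl (pol_rr f.1)]
  have h2 : Function.Injective (fun i => l * cen f.1 i) := fun i j hij =>
    cen_inj f.2.1 (mul_left_cancel₀ hl hij)
  obtain ⟨τ, hτ⟩ := perm_of_pr h2 (cen_inj g.2.1) h1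
  let f1 : OrdConfig (m + 1) Set.univ := ⟨fun i => l * cen f.1 i, h2, fun _ => trivial⟩
  let g1 : OrdConfig (m + 1) Set.univ := ⟨cen g.1, cen_inj g.2.1, fun _ => trivial⟩
  have e1 : pp f = pp f1 := pp_aff (a := - (l * ((∑ j, f.1 j) / (m + 1)))) hl (fun i => by
    simp only [f1, cen]; ring)
  have e2 : pp f1 = pp g1 := pp_perm ⟨τ, hτ⟩
  have e3 : pp g = pp g1 := pp_aff (a := - ((∑ j, g.1 j) / (m + 1))) one_ne_zero (fun i => by
    simp only [g1, cen]; ring)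
  rw [e1, e2, e3]

lemma F0_roots {a : ZZ m} {f : OrdConfig (m + 1) Set.univ} (h : pr f.1 = pol a.1) :
    F0 f = qq m a := by
  unfold F0
  congr 1
  apply Subtype.ext
  apply pol_inj
  rw [← pol_rr, cen_self (sum_zero_of_pr h), h]

lemma exists_roots (a : ZZ m) : ∃ f : OrdConfig (m + 1) Set.univ, pr f.1 = pol a.1 := by
  obtain ⟨f, hf⟩ := exists_rt a.1
  refine ⟨⟨f, ?_, fun _ => trivial⟩, hf⟩
  rw [← pr_sep, hf]; exact a.2

lemma F2_surj : Function.Surjective (F2 (m := m)) := by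
  intro y
  obtain ⟨a, rfl⟩ := qq_openQuotient.surjective y
  obtain ⟨f, hf⟩ := exists_roots a
  exact ⟨pp f, F0_roots hf⟩

lemma F2_closed : IsClosedMap (F2 (m := m)) := by
  intro T hT
  rw [← (qq_openQuotient (m := m)).isQuotientMap.isClosed_preimage]
  obtain ⟨T', hT', hTT⟩ := isClosed_induced_iff.1 (hT.preimage (pp_continuous (m := m)))
  have : qq m ⁻¹' (F2 '' T) = (fun a : ZZ m => ex a.1) ⁻¹' (cf (m + 1) '' T') := by
    ext a
    constructor
    · rintro ⟨x, hx, hxa⟩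
      obtain ⟨f, hf⟩ := exists_roots a
      have h1 : F2 (pp f) = F2 x := by rw [hxa]; exact F0_roots hf
      have h2 : pp f ∈ T := by rw [F2_inj h1]; exact hx
      have h3 : f ∈ Subtype.val ⁻¹' T' := by rw [hTT]; exact h2
      exact ⟨f.1, h3, cf_eq_ex.2 hf⟩
    · rintro ⟨f, hf, hfa⟩
      have hp := cf_eq_ex.1 hfa
      have hi : Function.Injective f := by rw [← pr_sep, hp]; exact a.2
      let f1 : OrdConfig (m + 1) Set.univ := ⟨f, hi, fun _ => trivial⟩
      have h3 : f1 ∈ Subtype.val ⁻¹' T' := hf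
      rw [hTT] at h3
      exact ⟨pp f1, h3, F0_roots hp⟩
  rw [this]
  exact (cf_closed _ _ hT').preimage (ex_continuous.comp continuous_subtype_val)

theorem reduce (h : SimplyConnectedSpace (YY m)) : SimplyConnectedSpace (ConfigModAff (m + 1)) := by
  let e : ConfigModAff (m + 1) ≃ₜ YY m :=
    (Equiv.ofBijective F2 ⟨F2_inj, F2_surj⟩).toHomeomorphOfContinuousClosed F2_continuous F2_closed
  exact e.toHomotopyEquiv.simplyConnectedSpace

lemma case_two : SimplyConnectedSpace (ConfigModAff 2) := by
  have hsub : Subsingleton (ConfigModAff (1 + 1)) := by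
    refine ⟨fun x y => ?_⟩
    obtain ⟨f, rfl⟩ := pp_surj x
    obtain ⟨g, rfl⟩ := pp_surj y
    have hf : f.1 1 - f.1 0 ≠ 0 := sub_ne_zero.2 fun h => by simpa using f.2.1 h
    have hg : g.1 1 - g.1 0 ≠ 0 := sub_ne_zero.2 fun h => by simpa using g.2.1 h
    refine pp_aff (b := (g.1 1 - g.1 0) / (f.1 1 - f.1 0))
      (a := g.1 0 - (g.1 1 - g.1 0) / (f.1 1 - f.1 0) * f.1 0) (div_ne_zero hg hf) ?_
    intro i
    fin_cases i
    · simp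
    · simp; field_simp; ring
  have hne : Nonempty (ConfigModAff (1 + 1)) :=
    ⟨pp ⟨fun i => (i.1 : ℂ), fun i j hij => by
      apply Fin.ext; simpa using hij, fun _ => trivial⟩⟩
  have : ContractibleSpace (ConfigModAff (1 + 1)) := by
    obtain ⟨x⟩ := hne
    haveI : Unique (ConfigModAff (1 + 1)) := ⟨⟨x⟩, fun y => Subsingleton.elim _ _⟩
    infer_instance
  exact SimplyConnectedSpace.ofContractible _

end homeo
end CMA


namespace CMA
open unitInterval Set Polynomial

section standard
variable {m : ℕ}

/-- the polynomial `z^(m+1) - s z + c` -/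
noncomputable def st (m : ℕ) (s c : ℂ) : Fin m → ℂ :=
  fun i => if i.1 = 0 then c else if i.1 = 1 then -s else 0

lemma st_continuous : Continuous fun z : ℂ × ℂ => st m z.1 z.2 := by
  refine continuous_pi fun i => ?_
  unfold st
  split_ifs <;> fun_prop

lemma pol_st (hm : 2 ≤ m) (s c : ℂ) : pol (st m s c) = X ^ (m + 1) - C s * X + C c := by
  obtain ⟨k, rfl⟩ := Nat.exists_eq_add_of_le' hm
  rw [pol, Fin.sum_univ_succ, Fin.sum_univ_succ]
  simp [st]
  ring

lemma st_eval (hm : 2 ≤ m) (s c z : ℂ) : (pol (st m s c)).eval z = z ^ (m + 1) - s * z + c := by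
  rw [pol_st hm]; simp

lemma st_deriv (hm : 2 ≤ m) (s c z : ℂ) :
    (derivative (pol (st m s c))).eval z = (m + 1) * z ^ m - s := by
  rw [pol_st hm]; simp [derivative_X_pow]

/-- the constant in the discriminant -/
noncomputable def kap (m : ℕ) : ℂ := (m : ℂ) ^ m / (m + 1) ^ (m + 1)

lemma succ_ne (m : ℕ) : (m + 1 : ℂ) ≠ 0 := by exact_mod_cast Nat.succ_ne_zero m

lemma st_mem (hm : 2 ≤ m) {s c : ℂ} (h : c ^ m ≠ kap m * s ^ (m + 1)) : st m s c ∈ ZZ m := by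
  rw [mem_ZZ]
  intro z hz hz'
  rw [st_deriv hm] at hz
  rw [st_eval hm] at hz'
  apply h
  have h1 := succ_ne m
  have h2 : z ^ m = s / (m + 1) := by field_simp; linear_combination hz
  have h3 : c = z * s * (m / (m + 1)) := by
    field_simp
    rw [pow_succ, h2] at hz'
    field_simp at hz'
    linear_combination hz'
  rw [h3, mul_pow, mul_pow, h2, kap, div_pow]
  field_simp
  ring

lemma st_mem_one (hm : 2 ≤ m) {c : ℂ} (h : st m 1 c ∈ ZZ m) : c ^ m ≠ kap m := by
  rw [mem_ZZ] at h
  intro hc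
  have h1 := succ_ne m
  have h2 : (m : ℂ) ≠ 0 := by norm_cast; omega
  have h3 : (c * (m + 1) / m) ^ m = 1 / (m + 1) := by
    rw [div_pow, mul_pow, hc, kap]
    field_simp
    ring
  refine h (c * (m + 1) / m) ?_ ?_
  · rw [st_deriv hm, h3]; field_simp; simp
  · rw [st_eval hm, pow_succ, h3]; field_simp; ring

/-- complement of the discriminant in the `(s, c^m)` plane -/
def TT (m : ℕ) : Set (ℂ × ℂ) := {z | z.2 ≠ kap m * z.1 ^ (m + 1)}

lemma pow_openQuotient (hm : m ≠ 0) : IsOpenQuotientMap fun c : ℂ => c ^ m := by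
  refine ⟨fun u => IsAlgClosed.exists_pow_nat_eq u (Nat.pos_of_ne_zero hm), by fun_prop, ?_⟩
  rcases (AnalyticOnNhd.is_constant_or_isOpenMap (g := fun c : ℂ => c ^ m)
    (fun z _ => by fun_prop)) with ⟨w, h⟩ | h
  · have h0 := h 0
    have h1 := h 1
    simp [hm] at h0 h1
    rw [← h0] at h1
    exact absurd h1 one_ne_zero
  · exact h

/-- the map `(s,c) ↦ (s, c^m)` -/
def pw (m : ℕ) : ℂ × ℂ → ℂ × ℂ := Prod.map id fun c => c ^ m

lemma pw_openQuotient (hm : m ≠ 0) : IsOpenQuotientMap (pw m) :=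
  IsOpenQuotientMap.id.prodMap (pow_openQuotient hm)

/-- class of the standard polynomial -/
noncomputable def PhiT (hm : 2 ≤ m) : C(pw m ⁻¹' TT m, YY m) :=
  (qq m).comp ⟨fun z => ⟨st m z.1.1 z.1.2, st_mem hm z.2⟩,
    (st_continuous.comp continuous_subtype_val).subtype_mk _⟩

lemma PhiT_desc (hm : 2 ≤ m) (z z' : pw m ⁻¹' TT m)
    (h : (TT m).restrictPreimage (pw m) z = (TT m).restrictPreimage (pw m) z') :
    PhiT hm z = PhiT hm z' := by
  obtain ⟨⟨s, c⟩, hz⟩ := z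
  obtain ⟨⟨s', c'⟩, hz'⟩ := z'
  have h1 := congrArg Subtype.val h
  simp only [Set.restrictPreimage_coe, pw, Prod.map, id, Prod.mk.injEq] at h1
  obtain ⟨rfl, h2⟩ := h1
  refine qq_eq.2 ?_
  change ∃ l : ℂ, l ≠ 0 ∧ st m s c' = act l (st m s c)
  have hm0 : m ≠ 0 := by omega
  by_cases hc : c = 0
  · subst hc
    rw [zero_pow hm0] at h2
    have hc' : c' = 0 := by simpa [hm0] using h2.symm
    subst hc'
    exact ⟨1, one_ne_zero, (act_one _).symm⟩
  · have hc' : c' ≠ 0 := by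
      rintro rfl
      rw [zero_pow hm0] at h2
      simp [hm0] at h2
      exact hc h2
    refine ⟨c' / c, div_ne_zero hc' hc, ?_⟩
    have hl : (c' / c) ^ m = 1 := by
      rw [div_pow, h2, div_self]; exact pow_ne_zero _ hc'
    ext i
    simp only [st, act]
    split_ifs with h0 h0'
    · rw [h0, Nat.sub_zero, pow_succ, hl]; field_simp
    · rw [h0', Nat.add_sub_cancel, hl, one_mul]
    · simp

/-- the descended map -/
noncomputable def PsiT (hm : 2 ≤ m) : C(TT m, YY m) :=
  IsQuotientMap.lift (f := ⟨(TT m).restrictPreimage (pw m),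
      ((pw_openQuotient (by omega : m ≠ 0)).restrictPreimage (TT m)).continuous⟩)
    ((pw_openQuotient (by omega : m ≠ 0)).restrictPreimage (TT m)).isQuotientMap (PhiT hm)
    (PhiT_desc hm)

lemma PsiT_apply (hm : 2 ≤ m) (s c u : ℂ) (h : (s, u) ∈ TT m) (hc : c ^ m = u) :
    PsiT hm ⟨(s, u), h⟩ = qq m ⟨st m s c, st_mem hm (by subst hc; exact h)⟩ := by
  subst hc
  have := IsQuotientMap.lift_comp (f := ⟨(TT m).restrictPreimage (pw m),
      ((pw_openQuotient (by omega : m ≠ 0)).restrictPreimage (TT m)).continuous⟩)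
    ((pw_openQuotient (by omega : m ≠ 0)).restrictPreimage (TT m)).isQuotientMap (PhiT hm)
    (PhiT_desc hm)
  exact congrFun (congrArg DFunLike.coe this) ⟨(s, c), h⟩

/-- the standard fibre map -/
noncomputable def stdmap (hm : 2 ≤ m) : C({c : ℂ // c ^ m ≠ kap m}, YY m) :=
  (qq m).comp ⟨fun c => ⟨st m 1 c.1, st_mem hm (by simpa using c.2)⟩,
    ((st_continuous.comp (continuous_const.prodMk continuous_subtype_val))).subtype_mk _⟩

lemma std_orbit (hm : 2 ≤ m) (c : ℂ) (hc : c ≠ 0) (h : st m 0 c ∈ ZZ m) (h' : st m 0 1 ∈ ZZ m) :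
    qq m ⟨st m 0 1, h'⟩ = qq m ⟨st m 0 c, h⟩ := by
  obtain ⟨l, hl⟩ := IsAlgClosed.exists_pow_nat_eq c (Nat.succ_pos m)
  refine qq_eq.2 ⟨l, ?_, ?_⟩
  · rintro rfl
    simp at hl
    exact hc hl.symm
  · ext i
    simp only [st, act]
    split_ifs with h0 h0'
    · rw [h0, Nat.sub_zero, hl, mul_one]
    · simp
    · simp

lemma std_TM (hm : 2 ≤ m) : TM (stdmap hm) := by
  have h1 : st m 0 1 ∈ ZZ m := st_mem hm (by simp)
  refine (TM.const (qq m ⟨st m 0 1, h1⟩)).of_homotopic (ContinuousMap.Homotopic.symm ⟨?_⟩)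
  refine
    { toFun := fun z => PsiT hm ⟨(1 - (z.1.1 : ℂ), z.2.1 ^ m - kap m + kap m * (1 - (z.1.1 : ℂ)) ^ (m + 1)), ?_⟩
      continuous_toFun := ?_
      map_zero_left := ?_
      map_one_left := ?_ }
  · intro h
    apply z.2.2
    have h' : z.2.1 ^ m - kap m + kap m * (1 - (z.1.1 : ℂ)) ^ (m + 1) =
      kap m * (1 - (z.1.1 : ℂ)) ^ (m + 1) := h
    linear_combination h'
  · refine (PsiT hm).continuous.comp (Continuous.subtype_mk ?_ _)
    fun_prop
  · intro c
    refine (PsiT_apply hm _ c.1 _ _ ?_).trans ?_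
    · simp
    · simp [stdmap]
  · intro c
    have hm0 : m ≠ 0 := by omega
    obtain ⟨c', hc'⟩ := IsAlgClosed.exists_pow_nat_eq (c.1 ^ m - kap m) (Nat.pos_of_ne_zero hm0)
    have hne : c' ≠ 0 := by
      rintro rfl
      rw [zero_pow hm0] at hc'
      exact c.2 (by linear_combination - hc')
    refine (PsiT_apply hm _ c' _ _ ?_).trans ?_
    · simp [hc']
    · refine Eq.trans ?_ (std_orbit hm c' hne (st_mem hm (by simp [hne])) h1).symm
      simp

end standard
end CMA


namespace CMA
open unitInterval Set Polynomial

section pencil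
variable {m : ℕ}

/-- shift of the constant coefficient -/
noncomputable def sh (a : Fin m → ℂ) (c : ℂ) : Fin m → ℂ := fun i => a i + if i.1 = 0 then c else 0

lemma sh_continuous : Continuous fun z : (Fin m → ℂ) × ℂ => sh z.1 z.2 := by
  refine continuous_pi fun i => ?_
  unfold sh
  split_ifs <;> fun_prop

lemma sh_sh (a : Fin m → ℂ) (c c' : ℂ) : sh (sh a c) c' = sh a (c + c') := by
  ext i; simp only [sh]; split_ifs <;> ring

lemma sh_zero (a : Fin m → ℂ) : sh a 0 = a := by
  ext i; simp [sh]

lemma pol_sh (hm : 2 ≤ m) (a : Fin m → ℂ) (c : ℂ) : pol (sh a c) = pol a + C c := by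
  obtain ⟨k, rfl⟩ := Nat.exists_eq_add_of_le' (show 1 ≤ m by omega)
  rw [pol, pol, Fin.sum_univ_succ, Fin.sum_univ_succ]
  simp [sh]
  ring

lemma sh_mem (hm : 2 ≤ m) (a : Fin m → ℂ) (c : ℂ) : sh a c ∈ ZZ m ↔
    ∀ z, (derivative (pol a)).eval z = 0 → (pol a).eval z + c ≠ 0 := by
  rw [mem_ZZ, pol_sh hm]
  simp

/-- polynomial with prescribed critical points -/
noncomputable def Aw (w : Fin m → ℂ) : Fin m → ℂ :=
  fun i => if i.1 = 0 then 0 else (m + 1) / (i.1 : ℂ) * (pr w).coeff (i.1 - 1)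

lemma pr_coeff_pred' (hm : 2 ≤ m) (w : Fin m → ℂ) : (pr w).coeff (m - 1) = - ∑ i, w i := by
  obtain ⟨k, rfl⟩ := Nat.exists_eq_add_of_le' (show 1 ≤ m by omega)
  exact pr_coeff_pred w

lemma deriv_Aw (hm : 2 ≤ m) {w : Fin m → ℂ} (hw : ∑ i, w i = 0) :
    derivative (pol (Aw w)) = C (m + 1 : ℂ) * pr w := by
  ext k
  rw [coeff_derivative, coeff_C_mul, pol_coeff]
  rcases lt_trichotomy (k + 1) m with h | h | h
  · rw [if_neg (by omega), dif_pos h]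
    have := succ_ne k
    simp [Aw]
    field_simp
  · rw [if_neg (by omega), dif_neg (by omega)]
    have : k = m - 1 := by omega
    rw [this, pr_coeff_pred' hm, hw]
    simp
  · rw [dif_neg (by omega)]
    by_cases hk : k = m
    · subst hk
      have h1 := (pr_monic w).leadingCoeff
      rw [leadingCoeff, pr_natDegree] at h1
      rw [h1]; simp
    · rw [if_neg (by omega), coeff_eq_zero_of_natDegree_lt]
      · simp
      · rw [pr_natDegree]; omega

lemma sh_Aw_mem (hm : 2 ≤ m) {w : Fin m → ℂ} (hw : ∑ i, w i = 0) (c : ℂ) :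
    sh (Aw w) c ∈ ZZ m ↔ ∀ j, c ≠ -(pol (Aw w)).eval (w j) := by
  rw [sh_mem hm, deriv_Aw hm hw]
  have h1 := succ_ne m
  constructor
  · intro h j hc
    refine h (w j) ?_ ?_
    · rw [eval_mul, (pr_root w (w j)).2 ⟨j, rfl⟩, mul_zero]
    · rw [hc]; ring
  · intro h z hz hz'
    rw [eval_mul, eval_C, mul_eq_zero, or_iff_right h1, pr_root] at hz
    obtain ⟨j, rfl⟩ := hz
    exact h j (by linear_combination hz')

lemma exists_crit (hm : 2 ≤ m) (a : Fin m → ℂ) : ∃ w : Fin m → ℂ, ∑ i, w i = 0 ∧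
    a = sh (Aw w) (a ⟨0, by omega⟩) := by
  have h1 := succ_ne m
  have hc : ∀ k, (C (1 / (m + 1 : ℂ)) * derivative (pol a)).coeff k =
      1 / (m + 1) * ((pol a).coeff (k + 1) * (k + 1)) := by
    intro k; rw [coeff_C_mul, coeff_derivative]
  have hd : (C (1 / (m + 1 : ℂ)) * derivative (pol a)).natDegree ≤ m := by
    rw [natDegree_le_iff_coeff_eq_zero]
    intro N hN
    rw [hc, pol_coeff, if_neg (by omega), dif_neg (by omega)]; simp
  have hcm : (C (1 / (m + 1 : ℂ)) * derivative (pol a)).coeff m = 1 := by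
    rw [hc, pol_coeff, if_pos rfl, dif_neg (by omega)]; field_simp; simp
  have hmon := monic_of_natDegree_le_of_coeff_eq_one m hd hcm
  have hd' : (C (1 / (m + 1 : ℂ)) * derivative (pol a)).natDegree = m :=
    le_antisymm hd (le_natDegree_of_ne_zero (by rw [hcm]; exact one_ne_zero))
  obtain ⟨w, hw⟩ := exists_pr m _ hmon hd'
  refine ⟨w, ?_, ?_⟩
  · have h2 := pr_coeff_pred' hm w
    rw [hw, hc, pol_coeff, if_neg (by omega), dif_neg (by omega)] at h2
    simpa using h2.symm
  · ext i
    simp only [sh, Aw]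
    split_ifs with h0
    · have : i = ⟨0, by omega⟩ := Fin.ext h0
      rw [this, zero_add]
    · have h3 : i.1 - 1 + 1 = i.1 := by omega
      have h4 : ((i.1 - 1 : ℕ) : ℂ) + 1 = (i.1 : ℂ) := by exact_mod_cast h3
      have h5 : (i.1 : ℂ) ≠ 0 := by exact_mod_cast h0
      rw [hw, hc, h3, h4, pol_coeff_fin]
      field_simp
      simp

/-- polynomial functions -/
def PF (f : ℂ → ℂ) : Prop := ∃ P : ℂ[X], ∀ s, f s = P.eval s

lemma PF.add {f g : ℂ → ℂ} (hf : PF f) (hg : PF g) : PF fun s => f s + g s := by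
  obtain ⟨P, hP⟩ := hf
  obtain ⟨Q, hQ⟩ := hg
  exact ⟨P + Q, fun s => by simp [hP, hQ]⟩

lemma PF.mul {f g : ℂ → ℂ} (hf : PF f) (hg : PF g) : PF fun s => f s * g s := by
  obtain ⟨P, hP⟩ := hf
  obtain ⟨Q, hQ⟩ := hg
  exact ⟨P * Q, fun s => by simp [hP, hQ]⟩

lemma PF.neg {f : ℂ → ℂ} (hf : PF f) : PF fun s => - f s := by
  obtain ⟨P, hP⟩ := hf
  exact ⟨-P, fun s => by simp [hP]⟩

lemma PF.pow {f : ℂ → ℂ} (hf : PF f) (k : ℕ) : PF fun s => f s ^ k := by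
  obtain ⟨P, hP⟩ := hf
  exact ⟨P ^ k, fun s => by simp [hP]⟩

lemma PF.const (c : ℂ) : PF fun _ => c := ⟨C c, fun s => by simp⟩

lemma PF.sum {κ : Type*} (t : Finset κ) {f : κ → ℂ → ℂ} (hf : ∀ k, PF (f k)) :
    PF fun s => ∑ k ∈ t, f k s := by
  choose P hP using hf
  exact ⟨∑ k ∈ t, P k, fun s => by simp [hP, eval_finsetSum]⟩

lemma PF.coeff {n : ℕ} {f : ℂ → Fin n → ℂ} (hf : ∀ j, PF fun s => f s j) (k : ℕ) :
    PF fun s => (pr (f s)).coeff k := by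
  choose P hP using hf
  refine ⟨(∏ j, (X - C (P j)) : ℂ[X][X]).coeff k, fun s => ?_⟩
  rw [← coe_evalRingHom, ← coeff_map, Polynomial.map_prod]
  simp [pr, hP]

lemma PF.continuous {f : ℂ → ℂ} (hf : PF f) : Continuous f := by
  obtain ⟨P, hP⟩ := hf
  have : f = fun s => P.eval s := funext hP
  rw [this]
  exact P.continuous

lemma PF.finite {f g : ℂ → ℂ} (hf : PF f) (hg : PF g) (s0 : ℂ) (h : f s0 ≠ g s0) :
    {s | f s = g s}.Finite := by
  obtain ⟨P, hP⟩ := hf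
  obtain ⟨Q, hQ⟩ := hg
  have hne : P - Q ≠ 0 := by
    intro h0
    apply h
    have := congrArg (eval s0) h0
    simp at this
    rw [hP, hQ]
    linear_combination this
  refine (P - Q).rootSet_finite ℂ |>.subset ?_
  intro s hs
  rw [mem_rootSet]
  refine ⟨hne, ?_⟩
  have hs' : f s = g s := hs
  rw [hP, hQ] at hs'
  simp [hs']

/-- the pencil of critical points -/
noncomputable def pen (w w0 : Fin m → ℂ) (s : ℂ) : Fin m → ℂ := fun j => (1 - s) * w j + s * w0 j

lemma pen_sum {w w0 : Fin m → ℂ} (hw : ∑ i, w i = 0) (hw0 : ∑ i, w0 i = 0) (s : ℂ) :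
    ∑ i, pen w w0 s i = 0 := by
  simp only [pen, Finset.sum_add_distrib, ← Finset.mul_sum, hw, hw0]; simp

lemma pen_PF (w w0 : Fin m → ℂ) (j : Fin m) : PF fun s => pen w w0 s j :=
  ⟨(1 - X) * C (w j) + X * C (w0 j), fun s => by simp [pen]; ring⟩

lemma Aw_pen_PF (w w0 : Fin m → ℂ) (j : Fin m) : PF fun s => Aw (pen w w0 s) j := by
  simp only [Aw]
  split_ifs
  · exact PF.const 0
  · exact (PF.const _).mul (PF.coeff (pen_PF w w0) _)

/-- the critical values, negated -/
noncomputable def cv (w w0 : Fin m → ℂ) (s : ℂ) (j : Fin m) : ℂ :=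
  -(pol (Aw (pen w w0 s))).eval (pen w w0 s j)

lemma cv_PF (w w0 : Fin m → ℂ) (j : Fin m) : PF fun s => cv w w0 s j := by
  simp only [cv, pol_eval]
  refine PF.neg (PF.add ((pen_PF w w0 j).pow _) (PF.sum _ fun k => ?_))
  exact (Aw_pen_PF w w0 k).mul ((pen_PF w w0 j).pow _)

/-- the family of classes over the pencil -/
noncomputable def Psi (hm : 2 ≤ m) {w w0 : Fin m → ℂ} (hw : ∑ i, w i = 0) (hw0 : ∑ i, w0 i = 0) :
    C(VV (cv w w0), YY m) :=
  (qq m).comp ⟨fun z => ⟨sh (Aw (pen w w0 z.1.1)) z.1.2,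
      (sh_Aw_mem hm (pen_sum hw hw0 z.1.1) z.1.2).2 z.2⟩, by
    refine Continuous.subtype_mk ?_ _
    refine sh_continuous.comp (Continuous.prodMk ?_ (by fun_prop))
    refine continuous_pi fun i => ?_
    exact (Aw_pen_PF w w0 i).continuous.comp (by fun_prop)⟩

lemma std_crit (hm : 2 ≤ m) : ∃ w0 : Fin m → ℂ, ∑ i, w0 i = 0 ∧ Aw w0 = st m 1 0 ∧
    Function.Injective fun j => -(pol (Aw w0)).eval (w0 j) := by
  have h1 := succ_ne m
  have hm0 : (m : ℂ) ≠ 0 := by norm_cast; omega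
  obtain ⟨w0, hw0, h⟩ := exists_crit hm (st m 1 0)
  have hA : Aw w0 = st m 1 0 := by
    have h2 : st m 1 0 ⟨0, by omega⟩ = 0 := by simp [st]
    rw [h2, sh_zero] at h
    exact h.symm
  have hd := deriv_Aw hm hw0
  rw [hA] at hd
  have hev : ∀ z, (pr w0).eval z = z ^ m - 1 / (m + 1) := by
    intro z
    have := congrArg (eval z) hd
    rw [st_deriv hm, eval_mul, eval_C] at this
    field_simp
    linear_combination - this
  have hpr : pr w0 = X ^ m - C (1 / (m + 1 : ℂ)) := by
    apply Polynomial.funext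
    intro z
    rw [hev]; simp
  have hinj : Function.Injective w0 := by
    rw [← pr_sep, hpr]
    exact separable_X_pow_sub_C _ hm0 (by simpa using h1)
  refine ⟨w0, hw0, hA, fun j k hjk => hinj ?_⟩
  have hv : ∀ j, -(pol (Aw w0)).eval (w0 j) = w0 j * (m / (m + 1)) := by
    intro j
    have h3 := hev (w0 j)
    rw [(pr_root w0 (w0 j)).2 ⟨j, rfl⟩] at h3
    have h4 : w0 j ^ m = 1 / (m + 1) := by linear_combination - h3
    rw [hA, st_eval hm, pow_succ, h4]
    field_simp
    ring
  simp only [hv] at hjk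
  exact mul_right_cancel₀ (div_ne_zero hm0 h1) hjk

/-- the class map on the line through `a` in the direction of the constant coefficient -/
noncomputable def fm (a : Fin m → ℂ) : C({c : ℂ // sh a c ∈ ZZ m}, YY m) :=
  (qq m).comp ⟨fun c => ⟨sh a c.1, c.2⟩,
    (sh_continuous.comp (continuous_const.prodMk continuous_subtype_val)).subtype_mk _⟩

lemma compl_finite_conn {S : Set ℂ} (hS : S.Finite) : IsPathConnected Sᶜ :=
  hS.countable.isPathConnected_compl_of_one_lt_rank (by
    rw [Complex.rank_real_complex]; exact Nat.one_lt_ofNat)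

theorem fm_TM (hm : 2 ≤ m) (a : Fin m → ℂ) : TM (fm a) := by
  obtain ⟨w0, hw0, hA, hinj⟩ := std_crit hm
  obtain ⟨w, hw, ha⟩ := exists_crit hm a
  have pen0 : pen w w0 0 = w := by ext j; simp [pen]
  have pen1 : pen w w0 1 = w0 := by ext j; simp [pen]
  -- the standard fibre
  have h1 : TM (fib (Psi hm hw hw0) 1) := by
    have hin : ∀ c : LL (cv w w0) 1, c.1 ^ m ≠ kap m := by
      intro c
      apply st_mem_one hm
      have := (sh_Aw_mem hm hw0 c.1).2 (by
        have h := c.2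
        simp only [cv, pen1] at h
        exact h)
      convert this using 1
      rw [hA]
      ext i
      simp only [sh, st]
      split_ifs <;> simp
    have heq : fib (Psi hm hw hw0) 1 =
        (stdmap hm).comp ⟨fun c => ⟨c.1, hin c⟩, by fun_prop⟩ := by
      ext c
      change qq m ⟨_, _⟩ = qq m ⟨_, _⟩
      congr 2
      simp only [pen1, hA]
      ext i
      simp only [sh, st, ContinuousMap.coe_mk]
      split_ifs <;> simp
    rw [heq]
    exact (std_TM hm).comp _
  -- the generic part of the pencil
  let B : Set ℂ := ⋃ j, ⋃ k, ⋃ (_ : j ≠ k), {s | cv w w0 s j = cv w w0 s k}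
  have hB : B.Finite := by
    refine Set.finite_iUnion fun j => Set.finite_iUnion fun k => Set.finite_iUnion fun hjk => ?_
    refine (cv_PF w w0 j).finite (cv_PF w w0 k) 1 ?_
    simp only [cv, pen1]
    exact fun h => hjk (hinj h)
  have hBinj : ∀ s ∈ Bᶜ, Function.Injective (cv w w0 s) := by
    intro s hs j k hjk
    by_contra hne
    exact hs (mem_iUnion.2 ⟨j, mem_iUnion.2 ⟨k, mem_iUnion.2 ⟨hne, hjk⟩⟩⟩)
  have h1B : (1 : ℂ) ∈ Bᶜ := by
    intro h
    simp only [B, mem_iUnion] at h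
    obtain ⟨j, k, hjk, h⟩ := h
    simp only [mem_ofPred_eq, cv, pen1] at h
    exact hjk (hinj h)
  have hcont : ∀ j, Continuous fun s => cv w w0 s j := fun j => (cv_PF w w0 j).continuous
  have h2 := fib_connected hcont (Psi hm hw hw0) Bᶜ
    (compl_finite_conn hB).isConnected.isPreconnected hBinj 1 h1B h1
  have h3 := fib_dense hcont (Psi hm hw hw0) Bᶜ (hB.countable.dense_compl ℝ) h2 0
  have key : ∀ c, sh a c = sh (Aw w) (a ⟨0, by omega⟩ + c) := by
    intro c
    conv_lhs => rw [ha]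
    rw [sh_sh]
  have hin : ∀ c : {c : ℂ // sh a c ∈ ZZ m}, ∀ j, a ⟨0, by omega⟩ + c.1 ≠ cv w w0 0 j := by
    intro c
    have := c.2
    rw [key, sh_Aw_mem hm hw] at this
    simpa only [cv, pen0] using this
  have heq : fm a = (fib (Psi hm hw hw0) 0).comp
      ⟨fun c => ⟨a ⟨0, by omega⟩ + c.1, hin c⟩, by fun_prop⟩ := by
    ext c
    change qq m ⟨_, _⟩ = qq m ⟨_, _⟩
    congr 2
    simp only [pen0]
    exact key _
  rw [heq]
  exact h3.comp _

end pencil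
end CMA


namespace CMA
open unitInterval Set Polynomial

section theta
variable {X Y : Type*} [TopologicalSpace X] [TopologicalSpace Y]

lemma homotopic_of_eq {u v y y' : Y} {P P' : Path u v} (Q Q' : Path y y') (h : P.Homotopic P')
    (hQ : ∀ t, Q t = P t) (hQ' : ∀ t, Q' t = P' t) : Q.Homotopic Q' := by
  have e0 : y = u := by have := hQ 0; simpa using this
  have e1 : y' = v := by have := hQ 1; simpa using this
  subst e0 e1
  have h1 : Q = P := by ext t; exact hQ t
  have h2 : Q' = P' := by ext t; exact hQ' t
  rw [h1, h2]
  exact h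

lemma theta_aux {y y' u v ys : Y} (e0 : u = y) (e1 : v = y') (γ : Path y y')
    (θ0 : Path.Homotopic.Quotient u ys) (θ1 : Path.Homotopic.Quotient v ys)
    (a : Path.Homotopic.Quotient y ys) (b : Path.Homotopic.Quotient y' ys)
    (ha : θ0 ≍ a) (hb : θ1 ≍ b)
    (h : (Path.Homotopic.Quotient.mk (γ.cast e0 e1)).trans θ1 = θ0) :
    (Path.Homotopic.Quotient.mk γ).trans b = a := by
  subst e0 e1
  obtain rfl := eq_of_heq ha
  obtain rfl := eq_of_heq hb
  exact h

lemma theta_global (φ : C(X, Y)) {ys : Y} (Θ : ∀ x, Path.Homotopic.Quotient (φ x) ys)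
    {x x' : X} (γ : Path x x')
    (h : ∀ t0 : I, ∃ N ∈ 𝓝 t0, ∀ (s t : N) (p : Path s t) (α : Path (φ (γ s)) (φ (γ t))),
      (∀ u, α u = φ (γ (p u))) → (Path.Homotopic.Quotient.mk α).trans (Θ (γ t)) = Θ (γ s)) :
    (Path.Homotopic.Quotient.mk (γ.map φ.continuous)).trans (Θ x') = Θ x := by
  have := local_global (γ.map φ.continuous) (fun t => Θ (γ t)) (by
    intro t0
    obtain ⟨N, hN, hh⟩ := h t0
    refine ⟨N, hN, fun s t hst hle => ?_⟩
    have hs : s ∈ N := hst (left_mem_Icc.2 hle)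
    have ht : t ∈ N := hst (right_mem_Icc.2 hle)
    let p0 : Path (0 : I) 1 := ⟨⟨id, continuous_id⟩, rfl, rfl⟩
    have hr := Path.range_subpath_of_le p0 s t hle
    have hmem : ∀ u, p0.subpath s t u ∈ N := by
      intro u
      apply hst
      have h1 : p0.subpath s t u ∈ range (p0.subpath s t) := ⟨u, rfl⟩
      rw [hr] at h1
      obtain ⟨w, hw, hw'⟩ := h1
      have hw2 : w = p0.subpath s t u := hw'
      rw [← hw2]; exact hw
    let p : Path (⟨s, hs⟩ : N) ⟨t, ht⟩ :=
      { toFun := fun u => ⟨p0.subpath s t u, hmem u⟩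
        continuous_toFun := by fun_prop
        source' := by apply Subtype.ext; exact (p0.subpath s t).source
        target' := by apply Subtype.ext; exact (p0.subpath s t).target }
    exact hh ⟨s, hs⟩ ⟨t, ht⟩ p ((γ.map φ.continuous).subpath s t) (fun u => rfl))
  rw [Path.subpath_zero_one] at this
  refine theta_aux _ _ _ _ _ _ _ ?_ ?_ this
  · exact congr_arg_heq Θ γ.source
  · exact congr_arg_heq Θ γ.target

lemma trans_cancel {y y' ys : Y} {a b : Path.Homotopic.Quotient y y'}
    {c : Path.Homotopic.Quotient y' ys} (h : a.trans c = b.trans c) : a = b := by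
  have := congrArg (fun z => z.trans c.symm) h
  simpa [Path.Homotopic.Quotient.trans_assoc] using this

end theta

section bigC
variable {m : ℕ}

lemma crit_bound (hm : 2 ≤ m) {R : ℝ} (a : Fin m → ℂ) (ha : ‖a‖ ≤ R) (z : ℂ)
    (hz : (derivative (pol a)).eval z = 0) : ‖z‖ ≤ 1 + m * m * R := by
  by_contra! hlt
  have hR : 0 ≤ R := (norm_nonneg a).trans ha
  have hz1 : 1 ≤ ‖z‖ := by
    have : 0 ≤ m * m * R := by positivity
    linarith
  rw [pol_deriv_eval] at hz
  have h1 : (m + 1 : ℂ) * z ^ m = - ∑ i : Fin m, a i * (i : ℕ) * z ^ ((i : ℕ) - 1) := by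
    linear_combination hz
  have h2 : ‖(m + 1 : ℂ) * z ^ m‖ ≤ ∑ i : Fin m, R * m * ‖z‖ ^ (m - 1) := by
    rw [h1, norm_neg]
    refine (norm_sum_le _ _).trans (Finset.sum_le_sum fun i _ => ?_)
    rw [norm_mul, norm_mul, norm_pow, Complex.norm_natCast]
    have h3 : ‖a i‖ ≤ R := (norm_le_pi_norm a i).trans ha
    have h4 : ((i : ℕ) : ℝ) ≤ m := by exact_mod_cast i.2.le
    have h5 : ‖z‖ ^ ((i : ℕ) - 1) ≤ ‖z‖ ^ (m - 1) := pow_le_pow_right₀ hz1 (by omega)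
    gcongr
  rw [norm_mul, norm_pow, Finset.sum_const, Finset.card_univ, Fintype.card_fin, nsmul_eq_mul] at h2
  have h6 : ‖(m + 1 : ℂ)‖ = m + 1 := by
    have := Complex.norm_natCast (m + 1)
    push_cast at this
    exact this
  rw [h6] at h2
  have h7 : ‖z‖ ^ m = ‖z‖ * ‖z‖ ^ (m - 1) := by
    rw [← pow_succ']; congr 1; omega
  rw [h7] at h2
  have h8 : 0 < ‖z‖ ^ (m - 1) := by positivity
  have h9 : (m + 1) * ‖z‖ ≤ m * m * R := by
    refine le_of_mul_le_mul_right ?_ h8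
    linarith
  have h10 : 0 ≤ (m : ℝ) * ‖z‖ := by positivity
  linarith

lemma exists_big (hm : 2 ≤ m) (R : ℝ) : ∃ D : ℂ, ∀ a : Fin m → ℂ, ‖a‖ ≤ R → sh a D ∈ ZZ m := by
  let B : ℝ := 1 + m * m * R
  refine ⟨((B ^ (m + 1) + m * (R * B ^ m) + 1 : ℝ) : ℂ), fun a ha => ?_⟩
  have hR : 0 ≤ R := (norm_nonneg a).trans ha
  have hB1 : 1 ≤ B := by
    have : 0 ≤ m * m * R := by positivity
    simp only [B]; linarith
  rw [sh_mem hm]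
  intro z hz h0
  have hzB : ‖z‖ ≤ B := crit_bound hm a ha z hz
  have h1 : ‖(pol a).eval z‖ ≤ B ^ (m + 1) + m * (R * B ^ m) := by
    rw [pol_eval]
    refine (norm_add_le _ _).trans (add_le_add ?_ ?_)
    · rw [norm_pow]; gcongr
    · have : ∑ i : Fin m, (R * B ^ m) = m * (R * B ^ m) := by simp
      rw [← this]
      refine (norm_sum_le _ _).trans (Finset.sum_le_sum fun i _ => ?_)
      rw [norm_mul, norm_pow]
      have h3 : ‖a i‖ ≤ R := (norm_le_pi_norm a i).trans ha
      have h4 : ‖z‖ ^ (i : ℕ) ≤ B ^ m :=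
        (pow_le_pow_left₀ (norm_nonneg _) hzB _).trans (pow_le_pow_right₀ hB1 i.2.le)
      gcongr
  have h2 : (pol a).eval z = - ((B ^ (m + 1) + m * (R * B ^ m) + 1 : ℝ) : ℂ) := by
    linear_combination h0
  rw [h2, norm_neg, Complex.norm_real, Real.norm_eq_abs] at h1
  have := le_abs_self (B ^ (m + 1) + m * (R * B ^ m) + 1)
  linarith

lemma fibre_conn (hm : 2 ≤ m) (a : Fin m → ℂ) : IsPathConnected {c : ℂ | sh a c ∈ ZZ m} := by
  obtain ⟨w, hw, ha⟩ := exists_crit hm a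
  have : {c : ℂ | sh a c ∈ ZZ m} =
      (range fun j => -(pol (Aw w)).eval (w j) - a ⟨0, by omega⟩)ᶜ := by
    ext c
    have key : sh a c = sh (Aw w) (a ⟨0, by omega⟩ + c) := by
      conv_lhs => rw [ha]
      rw [sh_sh]
    simp only [mem_ofPred_eq, mem_compl_iff, mem_range, not_exists]
    rw [key, sh_Aw_mem hm hw]
    refine forall_congr' fun j => not_congr ?_
    constructor <;> intro h <;> linear_combination - h
  rw [this]
  exact compl_finite_conn (finite_range _)

/-- the points of `ZZ m` whose rays are pushed into `ZZ m` by the shift `D` -/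
abbrev XC (m : ℕ) (D : ℂ) : Type :=
  {a : Fin m → ℂ // a ∈ ZZ m ∧ ∀ t : I, sh (((t : ℝ) : ℂ) • a) D ∈ ZZ m}

variable {D : ℂ}

lemma XC.mem1 (a : XC m D) : sh a.1 D ∈ ZZ m := by simpa using a.2.2 1

/-- the projection -/
noncomputable def qC (m : ℕ) (D : ℂ) : C(XC m D, YY m) :=
  (qq m).comp ⟨fun a => ⟨a.1, a.2.1⟩, by fun_prop⟩

/-- vertical path -/
noncomputable def lp (a : XC m D) (l : C(I, ℂ)) (h : ∀ u, sh a.1 (l u) ∈ ZZ m) (h0 : l 0 = 0)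
    (h1 : l 1 = D) : Path (qC m D a) (qq m ⟨sh a.1 D, a.mem1⟩) where
  toFun u := qq m ⟨sh a.1 (l u), h u⟩
  continuous_toFun := (qq m).continuous.comp
    ((sh_continuous.comp (continuous_const.prodMk l.continuous)).subtype_mk _)
  source' := by
    change qq m ⟨_, _⟩ = qq m ⟨_, _⟩
    congr 2
    rw [h0, sh_zero]
  target' := by
    congr 2
    rw [h1]

lemma lp_indep (hm : 2 ≤ m) (a : XC m D) (l : C(I, ℂ)) (h : ∀ u, sh a.1 (l u) ∈ ZZ m)
    (h0 : l 0 = 0) (h1 : l 1 = D) (l' : C(I, ℂ)) (h' : ∀ u, sh a.1 (l' u) ∈ ZZ m) (h0' : l' 0 = 0)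
    (h1' : l' 1 = D) : (lp a l h h0 h1).Homotopic (lp a l' h' h0' h1') := by
  have m0 : sh a.1 0 ∈ ZZ m := by rw [sh_zero]; exact a.2.1
  let P : Path (⟨0, m0⟩ : {c : ℂ // sh a.1 c ∈ ZZ m}) ⟨D, a.mem1⟩ :=
    { toFun := fun u => ⟨l u, h u⟩
      source' := Subtype.ext h0
      target' := Subtype.ext h1 }
  let P' : Path (⟨0, m0⟩ : {c : ℂ // sh a.1 c ∈ ZZ m}) ⟨D, a.mem1⟩ :=
    { toFun := fun u => ⟨l' u, h' u⟩
      source' := Subtype.ext h0'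
      target' := Subtype.ext h1' }
  exact homotopic_of_eq _ _ (fm_TM hm a.1 P P') (fun _ => rfl) (fun _ => rfl)

/-- radial path -/
noncomputable def sp (a : XC m D) (h : sh (0 : Fin m → ℂ) D ∈ ZZ m) :
    Path (qq m ⟨sh a.1 D, a.mem1⟩) (qq m ⟨sh 0 D, h⟩) where
  toFun u := qq m ⟨sh ((((unitInterval.symm u : I) : ℝ) : ℂ) • a.1) D, a.2.2 _⟩
  continuous_toFun := (qq m).continuous.comp
    ((sh_continuous.comp (Continuous.prodMk (by fun_prop) continuous_const)).subtype_mk _)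
  source' := by simp
  target' := by simp

lemma exists_lp (hm : 2 ≤ m) (a : XC m D) : ∃ l : C(I, ℂ), (∀ u, sh a.1 (l u) ∈ ZZ m) ∧ l 0 = 0 ∧
    l 1 = D := by
  obtain ⟨p, hp⟩ := (fibre_conn hm a.1).joinedIn 0 (by
    change sh a.1 0 ∈ ZZ m
    rw [sh_zero]; exact a.2.1) D a.mem1
  exact ⟨p.toContinuousMap, hp, p.source, p.target⟩

/-- the canonical class -/
noncomputable def ThetaC (hm : 2 ≤ m) (h : sh (0 : Fin m → ℂ) D ∈ ZZ m) (a : XC m D) :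
    Path.Homotopic.Quotient (qC m D a) (qq m ⟨sh 0 D, h⟩) :=
  (Path.Homotopic.Quotient.mk (lp a (exists_lp hm a).choose (exists_lp hm a).choose_spec.1
    (exists_lp hm a).choose_spec.2.1 (exists_lp hm a).choose_spec.2.2)).trans
    (Path.Homotopic.Quotient.mk (sp a h))

lemma ThetaC_eq (hm : 2 ≤ m) (h : sh (0 : Fin m → ℂ) D ∈ ZZ m) (a : XC m D)
    (l : C(I, ℂ)) (hl : ∀ u, sh a.1 (l u) ∈ ZZ m) (h0 : l 0 = 0) (h1 : l 1 = D) :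
    ThetaC hm h a = (Path.Homotopic.Quotient.mk (lp a l hl h0 h1)).trans
      (Path.Homotopic.Quotient.mk (sp a h)) := by
  rw [ThetaC]
  congr 1
  rw [Path.Homotopic.Quotient.eq]
  exact lp_indep hm a _ _ _ _ _ _ _ _

lemma qC_global (hm : 2 ≤ m) (h : sh (0 : Fin m → ℂ) D ∈ ZZ m) {x x' : XC m D} (γ : Path x x') :
    (Path.Homotopic.Quotient.mk (γ.map (qC m D).continuous)).trans (ThetaC hm h x') =
      ThetaC hm h x := by
  refine theta_global (qC m D) (ThetaC hm h) γ fun t0 => ?_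
  obtain ⟨l, hl, h0, h1⟩ := exists_lp hm (γ t0)
  have hc : Continuous fun z : I × I => sh (γ z.1).1 (l z.2) :=
    sh_continuous.comp (Continuous.prodMk (by fun_prop) (by fun_prop))
  have hN : ∀ᶠ t in 𝓝 t0, ∀ u ∈ (univ : Set I), sh (γ t).1 (l u) ∈ ZZ m := by
    refine isCompact_univ.eventually_forall_of_forall_eventually fun u _ => ?_
    exact (hc.continuousAt (x := (t0, u))).eventually (ZZ_open.mem_nhds (hl u))
  refine ⟨_, hN, ?_⟩
  intro s t p α hα
  have hs : ∀ u, sh (γ s).1 (l u) ∈ ZZ m := fun u => s.2 u trivial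
  have ht : ∀ u, sh (γ t).1 (l u) ∈ ZZ m := fun u => t.2 u trivial
  rw [ThetaC_eq hm h (γ s) l hs h0 h1, ThetaC_eq hm h (γ t) l ht h0 h1]
  let β : Path (qq m ⟨sh (γ s).1 D, (γ s).mem1⟩) (qq m ⟨sh (γ t).1 D, (γ t).mem1⟩) :=
    { toFun := fun u => qq m ⟨sh (γ (p u)).1 D, (γ (p u)).mem1⟩
      continuous_toFun := (qq m).continuous.comp
        ((sh_continuous.comp (Continuous.prodMk (by fun_prop) continuous_const)).subtype_mk _)
      source' := by simp
      target' := by simp }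
  have sq1 := square (X := {t : I | ∀ u ∈ (univ : Set I), sh (γ t).1 (l u) ∈ ZZ m})
    ((qq m).comp ⟨fun z => ⟨sh (γ z.1).1 (l z.2), z.1.2 z.2 trivial⟩,
      (sh_continuous.comp (Continuous.prodMk (by fun_prop) (by fun_prop))).subtype_mk _⟩)
    p α β (lp (γ s) l hs h0 h1) (lp (γ t) l ht h0 h1)
    (fun u => by
      rw [hα]
      change qq m ⟨_, _⟩ = qq m ⟨_, _⟩
      congr 2
      simp only [h0, sh_zero])
    (fun u => by
      change qq m ⟨_, _⟩ = qq m ⟨_, _⟩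
      congr 2
      simp only [h1])
    (fun u => rfl) (fun u => rfl)
  have sq2 := square (X := XC m D)
    ((qq m).comp ⟨fun z => ⟨sh ((((unitInterval.symm z.2 : I) : ℝ) : ℂ) • z.1.1) D, z.1.2.2 _⟩,
      (sh_continuous.comp (Continuous.prodMk (by fun_prop) continuous_const)).subtype_mk _⟩)
    ((p.map continuous_subtype_val).map γ.continuous) β (Path.refl (qq m ⟨sh 0 D, h⟩))
    (sp (γ s) h) (sp (γ t) h)
    (fun u => by
      change qq m ⟨_, _⟩ = qq m ⟨_, _⟩
      congr 2
      simp)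
    (fun u => by
      change qq m ⟨_, _⟩ = qq m ⟨_, _⟩
      congr 2
      simp)
    (fun u => rfl) (fun u => rfl)
  rw [← Path.Homotopic.Quotient.trans_assoc, sq1, Path.Homotopic.Quotient.trans_assoc, sq2]
  simp

lemma qC_TM (hm : 2 ≤ m) (h : sh (0 : Fin m → ℂ) D ∈ ZZ m) : TM (qC m D) := by
  intro x x' p p'
  rw [← Path.Homotopic.Quotient.eq]
  exact trans_cancel ((qC_global hm h p).trans (qC_global hm h p').symm)

lemma mem_XC {R : ℝ} (hR : 0 ≤ R) (hD : ∀ a : Fin m → ℂ, ‖a‖ ≤ R → sh a D ∈ ZZ m)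
    {a : Fin m → ℂ} (ha : ‖a‖ ≤ R) (t : I) : sh (((t : ℝ) : ℂ) • a) D ∈ ZZ m := by
  apply hD
  rw [norm_smul, Complex.norm_real, Real.norm_of_nonneg t.2.1]
  nlinarith [t.2.1, t.2.2, norm_nonneg a]

theorem qq_TM (hm : 2 ≤ m) : TM (qq m) := by
  intro x x' p p'
  have hcomp : IsCompact (range (fun t => (p t).1) ∪ range (fun t => (p' t).1)) :=
    (isCompact_range (by fun_prop)).union (isCompact_range (by fun_prop))
  obtain ⟨R, hR⟩ := hcomp.isBounded.exists_norm_le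
  have hR0 : 0 ≤ R := (norm_nonneg _).trans (hR (p 0).1 (Or.inl ⟨0, rfl⟩))
  obtain ⟨D, hD⟩ := exists_big hm R
  have hx := hR (p 0).1 (Or.inl ⟨0, rfl⟩)
  have hx' := hR (p 1).1 (Or.inl ⟨1, rfl⟩)
  rw [p.source] at hx
  rw [p.target] at hx'
  let P : Path (⟨x.1, x.2, mem_XC hR0 hD hx⟩ : XC m D) ⟨x'.1, x'.2, mem_XC hR0 hD hx'⟩ :=
    { toFun := fun t => ⟨(p t).1, (p t).2, mem_XC hR0 hD (hR _ (Or.inl ⟨t, rfl⟩))⟩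
      source' := by simp
      target' := by simp }
  let P' : Path (⟨x.1, x.2, mem_XC hR0 hD hx⟩ : XC m D) ⟨x'.1, x'.2, mem_XC hR0 hD hx'⟩ :=
    { toFun := fun t => ⟨(p' t).1, (p' t).2, mem_XC hR0 hD (hR _ (Or.inr ⟨t, rfl⟩))⟩
      source' := by simp
      target' := by simp }
  have h0 : sh (0 : Fin m → ℂ) D ∈ ZZ m := hD 0 (by simpa using hR0)
  exact homotopic_of_eq _ _ (qC_TM hm h0 P P') (fun _ => rfl) (fun _ => rfl)

theorem ZZ_joined (hm : 2 ≤ m) (x x' : ZZ m) : Joined x x' := by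
  let R := max ‖x.1‖ ‖x'.1‖
  have hR0 : 0 ≤ R := (norm_nonneg _).trans (le_max_left _ _)
  obtain ⟨D, hD⟩ := exists_big hm R
  have h0 : sh (0 : Fin m → ℂ) D ∈ ZZ m := hD 0 (by simpa using hR0)
  suffices h : ∀ y : ZZ m, ‖y.1‖ ≤ R → Joined y (⟨sh 0 D, h0⟩ : ZZ m) from
    (h x (le_max_left _ _)).trans (h x' (le_max_right _ _)).symm
  intro y hy
  obtain ⟨l, hl, hl0, hl1⟩ := exists_lp hm (⟨y.1, y.2, mem_XC hR0 hD hy⟩ : XC m D)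
  have j1 : Joined y (⟨sh y.1 D, hD _ hy⟩ : ZZ m) := ⟨
    { toFun := fun u => ⟨sh y.1 (l u), hl u⟩
      continuous_toFun := (sh_continuous.comp (continuous_const.prodMk l.continuous)).subtype_mk _
      source' := by apply Subtype.ext; simp [hl0, sh_zero]
      target' := by apply Subtype.ext; simp [hl1] }⟩
  have j2 : Joined (⟨sh 0 D, h0⟩ : ZZ m) (⟨sh y.1 D, hD _ hy⟩ : ZZ m) := ⟨
    { toFun := fun u => ⟨sh (((u : ℝ) : ℂ) • y.1) D, mem_XC hR0 hD hy u⟩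
      continuous_toFun :=
        (sh_continuous.comp (Continuous.prodMk (by fun_prop) continuous_const)).subtype_mk _
      source' := by apply Subtype.ext; simp
      target' := by apply Subtype.ext; simp }⟩
  exact j1.trans j2.symm

end bigC
end CMA


namespace CMA
open unitInterval Set Polynomial

section final
variable {m : ℕ}

/-- the base point -/
noncomputable def xs (hm : 2 ≤ m) : ZZ m := ⟨st m 0 1, st_mem hm (by simp)⟩

lemma orbit_path (x x' : ZZ m) (h : qq m x = qq m x') :
    ∃ o : Path x x', ∀ t, qq m (o t) = qq m x := by
  obtain ⟨l, hl, hx⟩ := qq_eq.1 h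
  obtain ⟨c, hc⟩ := (compl_finite_conn (finite_singleton (0 : ℂ))).joinedIn 1 (by simp) l
    (by simpa using hl)
  have hc' : ∀ t, c t ≠ 0 := fun t => by simpa using hc t
  refine ⟨⟨⟨fun t => ⟨act (c t) x.1, act_mem (hc' t) x.2⟩,
    (act_continuous'.comp (c.continuous.prodMk continuous_const)).subtype_mk _⟩, ?_, ?_⟩, ?_⟩
  · apply Subtype.ext; simp [act_one]
  · apply Subtype.ext; simp [hx]
  · intro t
    exact (qq_eq.2 ⟨c t, hc' t, rfl⟩).symm

lemma exists_ThetaY (hm : 2 ≤ m) (y : YY m) : ∃ θ : Path.Homotopic.Quotient y (qq m (xs hm)),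
    ∀ (α : Path y (qq m (xs hm))) (x : ZZ m) (p : Path x (xs hm)), (∀ t, α t = qq m (p t)) →
      θ = Path.Homotopic.Quotient.mk α := by
  obtain ⟨x0, rfl⟩ := qq_openQuotient.surjective y
  obtain ⟨p0⟩ := ZZ_joined hm x0 (xs hm)
  refine ⟨Path.Homotopic.Quotient.mk (p0.map (qq m).continuous), fun α x p hα => ?_⟩
  have he : qq m x0 = qq m x := by
    have := hα 0
    simpa using this
  obtain ⟨o, ho⟩ := orbit_path x0 x he
  have h1 := qq_TM hm p0 (o.trans p)
  rw [← Path.Homotopic.Quotient.eq] at h1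
  rw [h1]
  have h2 : (o.trans p).map (qq m).continuous = (Path.refl (qq m x0)).trans α := by
    ext t
    simp only [Path.map_coe, Function.comp, Path.trans_apply]
    split_ifs with h
    · rw [ho]; rfl
    · rw [hα]
  rw [h2, Path.Homotopic.Quotient.mk_trans]
  simp

/-- canonical classes in the orbit space -/
noncomputable def ThetaY (hm : 2 ≤ m) (y : YY m) : Path.Homotopic.Quotient y (qq m (xs hm)) :=
  (exists_ThetaY hm y).choose

lemma ThetaY_spec (hm : 2 ≤ m) {y : YY m} (α : Path y (qq m (xs hm))) {x : ZZ m}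
    (p : Path x (xs hm)) (h : ∀ t, α t = qq m (p t)) :
    ThetaY hm y = Path.Homotopic.Quotient.mk α :=
  (exists_ThetaY hm y).choose_spec α x p h

lemma ThetaY_lift (hm : 2 ≤ m) {y y' : YY m} (α : Path y y') {x x' : ZZ m} (p : Path x x')
    (h : ∀ t, α t = qq m (p t)) :
    (Path.Homotopic.Quotient.mk α).trans (ThetaY hm y') = ThetaY hm y := by
  obtain ⟨p'⟩ := ZZ_joined hm x' (xs hm)
  have he : y' = qq m x' := by
    have := h 1
    simpa using this
  let α' : Path y' (qq m (xs hm)) := (p'.map (qq m).continuous).cast he rfl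
  have h' : ∀ t, α' t = qq m (p' t) := fun t => rfl
  rw [ThetaY_spec hm α' p' h', ThetaY_spec hm (α.trans α') (p.trans p'),
    Path.Homotopic.Quotient.mk_trans]
  intro t
  simp only [Path.trans_apply]
  split_ifs
  · rw [h]
  · rw [h']

/-- nearby orbits contract to a given one through liftable paths -/
def Good (m : ℕ) (y : YY m) : Prop :=
  ∃ U ∈ 𝓝 y, ∃ H : C(U × I, YY m), ∀ u : U, H (u, 0) = u ∧ H (u, 1) = y ∧
    ∃ (b b' : ZZ m) (p : Path b b'), ∀ t, H (u, t) = qq m (p t)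

lemma global_of_good (hm : 2 ≤ m) (hg : ∀ y, Good m y) {y y' : YY m} (δ : Path y y') :
    (Path.Homotopic.Quotient.mk δ).trans (ThetaY hm y') = ThetaY hm y := by
  have := theta_global (ContinuousMap.id (YY m)) (ThetaY hm) δ (fun t0 => by
    obtain ⟨U, hU, H, hH⟩ := hg (δ t0)
    refine ⟨δ ⁻¹' U, δ.continuous.continuousAt hU, ?_⟩
    intro s t p
    suffices key : ∀ α : Path (δ s) (δ t), (∀ u, α u = δ (p u)) →
        (Path.Homotopic.Quotient.mk α).trans (ThetaY hm (δ t)) = ThetaY hm (δ s) from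
      fun α hα => key α hα
    intro α hα
    obtain ⟨hs0, hs1, bs, bs', ps, hps⟩ := hH ⟨δ s, s.2⟩
    obtain ⟨ht0, ht1, bt, bt', pt, hpt⟩ := hH ⟨δ t, t.2⟩
    let l : Path (δ s) (δ t0) :=
      { toFun := fun u => H (⟨δ s, s.2⟩, u)
        source' := hs0
        target' := hs1 }
    let r : Path (δ t) (δ t0) :=
      { toFun := fun u => H (⟨δ t, t.2⟩, u)
        source' := ht0
        target' := ht1 }
    let q : Path (⟨δ s, s.2⟩ : U) ⟨δ t, t.2⟩ :=
      { toFun := fun u => ⟨δ (p u), (p u).2⟩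
        source' := by simp
        target' := by simp }
    have sq := square H q α (Path.refl (δ t0)) l r
      (fun u => by rw [(hH _).1]; exact hα u)
      (fun u => by rw [(hH _).2.1]; rfl) (fun u => rfl) (fun u => rfl)
    have e1 := ThetaY_lift hm l ps hps
    have e2 := ThetaY_lift hm r pt hpt
    rw [← e1, ← e2, ← Path.Homotopic.Quotient.trans_assoc]
    refine (congrArg (fun z => Path.Homotopic.Quotient.trans z (ThetaY hm (δ t0))) sq).trans ?_
    simp)
  exact this

theorem simply_of_good (hm : 2 ≤ m) (hg : ∀ y, Good m y) : SimplyConnectedSpace (YY m) := by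
  rw [simply_connected_iff_paths_homotopic']
  refine ⟨?_, ?_⟩
  · refine ⟨⟨qq m (xs hm)⟩, fun y y' => ?_⟩
    obtain ⟨x, rfl⟩ := qq_openQuotient.surjective y
    obtain ⟨x', rfl⟩ := qq_openQuotient.surjective y'
    obtain ⟨p⟩ := ZZ_joined hm x x'
    exact ⟨p.map (qq m).continuous⟩
  · intro y y' p p'
    rw [← Path.Homotopic.Quotient.eq]
    exact trans_cancel ((global_of_good hm hg p).trans (global_of_good hm hg p').symm)

end final

section local_contraction
variable {m : ℕ}

/-- the weights of the nonzero coordinates -/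
noncomputable def wt (a : Fin m → ℂ) (i : Fin m) : ℤ :=
  open Classical in if a i = 0 then 0 else ((m + 1 - (i : ℕ) : ℕ) : ℤ)

lemma exists_bezout (a : Fin m → ℂ) (ha : a ≠ 0) : ∃ (d : ℤ) (c k : Fin m → ℤ), d ≠ 0 ∧
    ∑ i, c i * wt a i = d ∧ ∀ i, wt a i = d * k i := by
  let J : Ideal ℤ := Ideal.span (range (wt a))
  have h1 : Submodule.IsPrincipal.generator J ∈ J := Submodule.IsPrincipal.generator_mem J
  obtain ⟨c, hc⟩ := Ideal.mem_span_range_iff_exists_fun.1 h1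
  have h2 : ∀ i, ∃ k, wt a i = Submodule.IsPrincipal.generator J * k := by
    intro i
    exact (Submodule.IsPrincipal.mem_iff_generator_dvd J).1 (Ideal.subset_span ⟨i, rfl⟩)
  choose k hk using h2
  refine ⟨_, c, k, ?_, hc, hk⟩
  intro h0
  apply ha
  ext i
  by_contra hi
  have hi' : a i ≠ 0 := hi
  have h3 := hk i
  rw [h0, zero_mul, wt, if_neg hi'] at h3
  omega

/-- the monomial -/
noncomputable def mon (a : Fin m → ℂ) (c : Fin m → ℤ) (b : Fin m → ℂ) : ℂ :=
  open Classical in ∏ i, if a i = 0 then 1 else b i ^ c i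

/-- retraction to the orbit of `a` -/
noncomputable def rho (a : Fin m → ℂ) (c k : Fin m → ℤ) (b : Fin m → ℂ) : Fin m → ℂ :=
  fun i => a i * (mon a c b / mon a c a) ^ k i

/-- segment to the retraction -/
noncomputable def sg (a : Fin m → ℂ) (c k : Fin m → ℤ) (b : Fin m → ℂ) (s : I) : Fin m → ℂ :=
  fun i => (1 - ((s : ℝ) : ℂ)) * b i + ((s : ℝ) : ℂ) * rho a c k b i

/-- admissible coordinates -/
def Adm (a b : Fin m → ℂ) : Prop := ∀ i, a i ≠ 0 → b i ≠ 0

lemma mon_ne {a b : Fin m → ℂ} (c : Fin m → ℤ) (h : Adm a b) : mon a c b ≠ 0 := by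
  rw [mon, Finset.prod_ne_zero_iff]
  intro i _
  split_ifs with hi
  · exact one_ne_zero
  · exact zpow_ne_zero _ (h i hi)

lemma mon_act {a : Fin m → ℂ} {c : Fin m → ℤ} {d : ℤ} (hd : ∑ i, c i * wt a i = d) {l : ℂ}
    (hl : l ≠ 0) (b : Fin m → ℂ) : mon a c (act l b) = l ^ d * mon a c b := by
  have h1 : l ^ d = ∏ i, l ^ (c i * wt a i) := by
    rw [← hd]
    have : ∀ s : Finset (Fin m), l ^ (∑ i ∈ s, c i * wt a i) = ∏ i ∈ s, l ^ (c i * wt a i) := by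
      intro s
      induction s using Finset.induction_on with
      | empty => simp
      | insert j s hj ih => rw [Finset.sum_insert hj, Finset.prod_insert hj, zpow_add₀ hl, ih]
    exact this _
  rw [h1, mon, mon, ← Finset.prod_mul_distrib]
  refine Finset.prod_congr rfl fun i _ => ?_
  simp only [wt, act]
  split_ifs with hi
  · simp
  · rw [mul_zpow, mul_comm (c i), zpow_mul, zpow_natCast]

lemma rho_act {a : Fin m → ℂ} {c k : Fin m → ℤ} {d : ℤ} (hd : ∑ i, c i * wt a i = d)
    (hk : ∀ i, wt a i = d * k i) {l : ℂ} (hl : l ≠ 0) (b : Fin m → ℂ) :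
    rho a c k (act l b) = act l (rho a c k b) := by
  ext i
  simp only [rho, act]
  by_cases hi : a i = 0
  · simp [hi]
  · have h1 : l ^ (m + 1 - (i : ℕ)) = (l ^ d) ^ k i := by
      rw [← zpow_mul, ← hk, wt, if_neg hi, zpow_natCast]
    rw [mon_act hd hl, h1, mul_div_assoc, mul_zpow]
    ring

lemma rho_self (a : Fin m → ℂ) (c k : Fin m → ℤ) : rho a c k a = a := by
  ext i
  rw [rho, div_self (mon_ne c fun _ h => h), one_zpow, mul_one]

lemma exists_zroot {d : ℤ} (hd : d ≠ 0) {u : ℂ} (hu : u ≠ 0) : ∃ l : ℂ, l ≠ 0 ∧ l ^ d = u := by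
  have key : ∀ n : ℕ, n ≠ 0 → ∀ u : ℂ, u ≠ 0 → ∃ l : ℂ, l ≠ 0 ∧ l ^ n = u := by
    intro n hn u hu
    obtain ⟨l, hl⟩ := IsAlgClosed.exists_pow_nat_eq u (Nat.pos_of_ne_zero hn)
    refine ⟨l, ?_, hl⟩
    rintro rfl
    rw [zero_pow hn] at hl
    exact hu hl.symm
  rcases Int.natAbs_eq d with h | h
  · obtain ⟨l, hl, hlu⟩ := key d.natAbs (by simpa using hd) u hu
    exact ⟨l, hl, by rw [h, zpow_natCast, hlu]⟩
  · obtain ⟨l, hl, hlu⟩ := key d.natAbs (by simpa using hd) u⁻¹ (inv_ne_zero hu)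
    exact ⟨l, hl, by rw [h, zpow_neg, zpow_natCast, hlu, inv_inv]⟩

lemma rho_orbit {a : Fin m → ℂ} {c k : Fin m → ℤ} {d : ℤ} (hd0 : d ≠ 0)
    (hk : ∀ i, wt a i = d * k i) {b : Fin m → ℂ} (hb : Adm a b) :
    ∃ l : ℂ, l ≠ 0 ∧ rho a c k b = act l a := by
  obtain ⟨l, hl, hlu⟩ := exists_zroot hd0 (div_ne_zero (mon_ne c hb)
    (mon_ne (a := a) (b := a) c fun _ h => h))
  refine ⟨l, hl, ?_⟩
  ext i
  simp only [rho, act]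
  by_cases hi : a i = 0
  · simp [hi]
  · have h1 : l ^ (m + 1 - (i : ℕ)) = (l ^ d) ^ k i := by
      rw [← zpow_mul, ← hk, wt, if_neg hi, zpow_natCast]
    rw [h1, hlu, mul_comm]

lemma sg_act {a : Fin m → ℂ} {c k : Fin m → ℤ} {d : ℤ} (hd : ∑ i, c i * wt a i = d)
    (hk : ∀ i, wt a i = d * k i) {l : ℂ} (hl : l ≠ 0) (b : Fin m → ℂ) (s : I) :
    sg a c k (act l b) s = act l (sg a c k b s) := by
  ext i
  rw [sg, rho_act hd hk hl]
  simp only [act, sg]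
  ring

lemma mon_continuousAt {a b : Fin m → ℂ} (c : Fin m → ℤ) (h : Adm a b) :
    ContinuousAt (mon a c) b := by
  unfold mon
  refine tendsto_finsetProd _ fun i _ => ?_
  split_ifs with hi
  · exact tendsto_const_nhds
  · exact ((continuous_apply i).continuousAt).zpow₀ (c i) (Or.inl (h i hi))

lemma sg_continuousAt {a b : Fin m → ℂ} (c k : Fin m → ℤ) (h : Adm a b) (s : I) :
    ContinuousAt (fun z : (Fin m → ℂ) × I => sg a c k z.1 z.2) (b, s) := by
  refine continuousAt_pi.2 fun i => ?_
  simp only [sg, rho]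
  have h1 : ContinuousAt (fun z : (Fin m → ℂ) × I => mon a c z.1) (b, s) :=
    ContinuousAt.comp (f := Prod.fst) (mon_continuousAt c h) continuousAt_fst
  have h2 : ContinuousAt (fun z : (Fin m → ℂ) × I => (mon a c z.1 / mon a c a) ^ k i) (b, s) :=
    (h1.div_const _).zpow₀ _ (Or.inl (div_ne_zero (mon_ne c h) (mon_ne c fun _ h => h)))
  fun_prop

/-- the good neighbourhood -/
def WW (a : Fin m → ℂ) (c k : Fin m → ℤ) : Set (Fin m → ℂ) :=
  {b | Adm a b ∧ ∀ s, sg a c k b s ∈ ZZ m}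

lemma WW_open (a : Fin m → ℂ) (c k : Fin m → ℤ) : IsOpen (WW a c k) := by
  rw [isOpen_iff_mem_nhds]
  rintro b ⟨hb, hs⟩
  have h1 : ∀ᶠ b' in 𝓝 b, Adm a b' := by
    unfold Adm
    rw [Filter.eventually_all]
    intro i
    by_cases hi : a i = 0
    · simp [hi]
    · filter_upwards [((continuous_apply i).continuousAt (x := b)).eventually_ne (hb i hi)] with b' h _
      exact h
  have h2 : ∀ᶠ b' in 𝓝 b, ∀ s ∈ (univ : Set I), sg a c k b' s ∈ ZZ m := by
    refine isCompact_univ.eventually_forall_of_forall_eventually fun s _ => ?_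
    exact (sg_continuousAt c k hb s).eventually (ZZ_open.mem_nhds (hs s))
  filter_upwards [h1, h2] with b' h h'
  exact ⟨h, fun s => h' s trivial⟩

lemma sg_self (a : Fin m → ℂ) (c k : Fin m → ℤ) (s : I) : sg a c k a s = a := by
  ext i
  rw [sg, rho_self]; ring

theorem good (hm : 2 ≤ m) (y : YY m) : Good m y := by
  obtain ⟨a, rfl⟩ := qq_openQuotient.surjective y
  have ha0 : a.1 ≠ 0 := by
    intro h
    have h1 := (mem_ZZ a.1).1 a.2 0
    rw [h, pol_deriv_eval, pol_eval] at h1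
    have hm0 : m ≠ 0 := by omega
    simp [hm0] at h1
  obtain ⟨d, c, k, hd0, hd, hk⟩ := exists_bezout a.1 ha0
  let WZ : Set (ZZ m) := Subtype.val ⁻¹' WW a.1 c k
  have hWZ : IsOpen WZ := (WW_open _ _ _).preimage continuous_subtype_val
  have haW : a ∈ WZ := ⟨fun _ h => h, fun s => by rw [sg_self]; exact a.2⟩
  let U : Set (YY m) := qq m '' WZ
  have hU : IsOpen U := qq_openQuotient.isOpenMap _ hWZ
  have hsat : ∀ b : ZZ m, qq m b ∈ U → b.1 ∈ WW a.1 c k := by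
    rintro b ⟨b', hb', hbb⟩
    obtain ⟨l, hl, h⟩ := qq_eq.1 hbb
    refine ⟨?_, fun s => ?_⟩
    · intro i hi
      rw [h]
      exact mul_ne_zero (pow_ne_zero _ hl) (hb'.1 i hi)
    · rw [h, sg_act hd hk hl]
      exact act_mem hl (hb'.2 s)
  let f : C((qq m ⁻¹' U) × I, U × I) :=
    ⟨Prod.map (U.restrictPreimage (qq m)) id,
      ((qq_openQuotient.restrictPreimage U).prodMap IsOpenQuotientMap.id).continuous⟩
  have hf : IsQuotientMap f :=
    ((qq_openQuotient.restrictPreimage U).prodMap IsOpenQuotientMap.id).isQuotientMap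
  let g : C((qq m ⁻¹' U) × I, YY m) :=
    (qq m).comp ⟨fun z => ⟨sg a.1 c k z.1.1.1 z.2, (hsat z.1.1 z.1.2).2 z.2⟩, by
      refine Continuous.subtype_mk ?_ _
      rw [continuous_iff_continuousAt]
      intro z
      exact ContinuousAt.comp (f := fun z : (qq m ⁻¹' U) × I => (z.1.1.1, z.2))
        (sg_continuousAt c k (hsat z.1.1 z.1.2).1 z.2) (by fun_prop)⟩
  have hfg : ∀ z z', f z = f z' → g z = g z' := by
    rintro ⟨b, s⟩ ⟨b', s'⟩ h
    have h1 : qq m b.1 = qq m b'.1 := congrArg (fun w => w.1.1) h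
    have h2 : s = s' := congrArg (fun w => w.2) h
    subst h2
    obtain ⟨l, hl, h3⟩ := qq_eq.1 h1
    refine qq_eq.2 ⟨l, hl, ?_⟩
    change sg a.1 c k b'.1.1 s = act l (sg a.1 c k b.1.1 s)
    rw [h3, sg_act hd hk hl]
  let H : C(U × I, YY m) := hf.lift g hfg
  have hH : ∀ (b : qq m ⁻¹' U) (s : I), H (⟨qq m b.1, b.2⟩, s) =
      qq m ⟨sg a.1 c k b.1.1 s, (hsat b.1 b.2).2 s⟩ := by
    intro b s
    exact congrFun (congrArg DFunLike.coe (hf.lift_comp g hfg)) (b, s)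
  refine ⟨U, hU.mem_nhds ⟨a, haW, rfl⟩, H, ?_⟩
  rintro ⟨u, hu⟩
  obtain ⟨b, rfl⟩ := qq_openQuotient.surjective u
  have hW := hsat b hu
  refine ⟨?_, ?_, ?_⟩
  · rw [hH ⟨b, hu⟩]
    congr 2
    ext i
    simp [sg]
  · rw [hH ⟨b, hu⟩]
    obtain ⟨l, hl, h⟩ := rho_orbit (c := c) hd0 hk hW.1
    refine (qq_eq.2 ⟨l, hl, ?_⟩).symm
    rw [← h]
    ext i
    simp [sg]
  · refine ⟨_, _, ⟨⟨fun s => ⟨sg a.1 c k b.1 s, hW.2 s⟩, ?_⟩, rfl, rfl⟩, fun t => hH ⟨b, hu⟩ t⟩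
    refine Continuous.subtype_mk ?_ _
    rw [continuous_iff_continuousAt]
    intro s
    exact ContinuousAt.comp (f := fun s : I => (b.1, s)) (sg_continuousAt c k hW.1 s) (by fun_prop)

end local_contraction

theorem main (n : ℕ) (hn : 2 ≤ n) : SimplyConnectedSpace (ConfigModAff n) := by
  rcases Nat.lt_or_ge 2 n with h | h
  · obtain ⟨m, rfl⟩ := Nat.exists_eq_add_of_le' (show 1 ≤ n by omega)
    have hm : 2 ≤ m := by omega
    exact reduce (simply_of_good hm (good hm))
  · obtain rfl : n = 2 := by omega
    exact case_two

end CMA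



/-- For `n ≥ 2`, the orbit space `C_n(ℂ)/(ℂ⋊ℂ*) ≅ M_{0,n+1}/Σ_n` is simply connected. -/
theorem configModAff_simplyConnected (n : ℕ) (hn : 2 ≤ n) :
    SimplyConnectedSpace (ConfigModAff n) := CMA.main n hn
end

section
/- Let p be a prime, q ≥ 1, and n = pq. Let ζ = e^{2πi/p}. The fixed-point subspace C_n(ℂ)^{ℤ/p} of C_n(ℂ), consisting of those unordered configurations that are mapped to themselves by multiplication of every point by ζ, equipped with the subspace topology, is homeomorphic to the unordered configuration space C_q(ℂ∖{0}) of q points in the punctured plane. -/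
open Complex Topology

/-- The fixed-point set `C_n(ℂ)^{ℤ/p}`: unordered configurations whose underlying set of
points is invariant under multiplication by `ζ = e^{2πi/p}`. -/
def zetaFixed (p n : ℕ) : Set (UConfig n Set.univ) :=
  {c | ∃ (f : OrdConfig n Set.univ) (σ : Equiv.Perm (Fin n)),
        Quot.mk _ f = c ∧
        ∀ i, f.1 (σ i) = Complex.exp (2 * Real.pi * Complex.I / p) * f.1 i}

namespace ZetaAux

lemma exists_perm {n : ℕ} {f g : Fin n → ℂ} (hg : Function.Injective g)
    (h : ∀ i, ∃ j, f j = g i) : ∃ σ : Equiv.Perm (Fin n), g = f ∘ σ := by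
  choose s hs using h
  have hsi : Function.Injective s := fun a b hab => hg (by rw [← hs a, ← hs b, hab])
  refine ⟨Equiv.ofBijective s (Finite.injective_iff_bijective.mp hsi), ?_⟩
  funext i
  simp [hs]

lemma mk_eq {n : ℕ} {X : Set ℂ} (f g : OrdConfig n X) :
    (Quot.mk (permRel n X) f = Quot.mk (permRel n X) g) ↔ permRel n X f g := by
  have he : Equivalence (permRel n X) := by
    refine ⟨fun f => ⟨1, by simp⟩, ?_, ?_⟩
    · rintro f g ⟨σ, h⟩
      exact ⟨σ⁻¹, by funext i; simp [h]⟩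
    · rintro f g k ⟨σ, h⟩ ⟨τ, h'⟩
      exact ⟨σ * τ, by funext i; simp [h, h']⟩
  exact ⟨fun h => he.eqvGen_iff.mp (Quot.eqvGen_exact h), fun h => Quot.sound h⟩

lemma mk_eq_range {n : ℕ} {X : Set ℂ} (f g : OrdConfig n X) :
    (Quot.mk (permRel n X) f = Quot.mk (permRel n X) g) ↔ Set.range f.1 = Set.range g.1 := by
  rw [mk_eq]
  constructor
  · rintro ⟨σ, h⟩
    rw [h, σ.surjective.range_comp]
  · intro h
    exact exists_perm g.2.1 fun i => by
      have : g.1 i ∈ Set.range f.1 := h ▸ Set.mem_range_self i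
      exact this

lemma mk_eq_of_subset {n : ℕ} {X : Set ℂ} (f g : OrdConfig n X)
    (h : ∀ i, ∃ j, f.1 j = g.1 i) :
    Quot.mk (permRel n X) f = Quot.mk (permRel n X) g := by
  rw [mk_eq]
  exact exists_perm g.2.1 h

lemma isOpenMap_mk (n : ℕ) (X : Set ℂ) : IsOpenMap (Quot.mk (permRel n X)) := by
  intro U hU
  rw [← isQuotientMap_quot_mk.isOpen_preimage]
  have : Quot.mk (permRel n X) ⁻¹' (Quot.mk (permRel n X) '' U) =
      ⋃ σ : Equiv.Perm (Fin n), (fun f : OrdConfig n X =>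
        (⟨f.1 ∘ σ, f.2.1.comp σ.injective, fun i => f.2.2 _⟩ : OrdConfig n X)) ⁻¹' U := by
    ext f
    simp only [Set.mem_preimage, Set.mem_image, Set.mem_iUnion]
    constructor
    · rintro ⟨g, hg, h⟩
      obtain ⟨σ, hσ⟩ := (mk_eq f g).mp h.symm
      exact ⟨σ, by convert hg; exact hσ.symm⟩
    · rintro ⟨σ, h⟩
      exact ⟨_, h, ((mk_eq _ _).mpr ⟨σ, rfl⟩).symm⟩
  rw [this]
  refine isOpen_iUnion fun σ => hU.preimage ?_
  refine Continuous.subtype_mk ?_ _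
  exact continuous_pi fun i => (continuous_apply _).comp continuous_subtype_val

/-- the root of unity -/
noncomputable def zt (p : ℕ) : ℂ := Complex.exp (2 * Real.pi * Complex.I / p)

lemma zt_prim {p : ℕ} (hp : p.Prime) : IsPrimitiveRoot (zt p) p :=
  Complex.isPrimitiveRoot_exp p hp.ne_zero

lemma mem_zetaFixed {p n : ℕ} (hp : p.Prime) (f : OrdConfig n Set.univ) :
    Quot.mk _ f ∈ zetaFixed p n ↔ ∀ i, ∃ j, f.1 j = zt p * f.1 i := by
  constructor
  · rintro ⟨g, σ, h, hσ⟩ i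
    rw [mk_eq_range] at h
    obtain ⟨k, hk⟩ : f.1 i ∈ Set.range g.1 := h ▸ Set.mem_range_self i
    have : g.1 (σ k) ∈ Set.range f.1 := h ▸ Set.mem_range_self _
    obtain ⟨j, hj⟩ := this
    exact ⟨j, by rw [hj, hσ, hk]; rfl⟩
  · intro h
    have h0 : zt p ≠ 0 := (zt_prim hp).ne_zero hp.ne_zero
    obtain ⟨σ, hσ⟩ := exists_perm (f := f.1) (g := fun i => zt p * f.1 i)
      (fun a b hab => f.2.1 (mul_left_cancel₀ h0 hab)) h
    exact ⟨f, σ, rfl, fun i => (congrFun hσ i).symm⟩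

/-- all `p`-th power roots -/
noncomputable def ext (p : ℕ) {q : ℕ} (g : Fin q → ℂ) : Fin (p * q) → ℂ := fun k =>
  zt p ^ ((finProdFinEquiv.symm k).1 : ℕ) * g (finProdFinEquiv.symm k).2

/-- good tuples -/
def good (q : ℕ) : Set (Fin q → ℂ) :=
  {f | Function.Injective f ∧ ∀ i, f i ∈ {z : ℂ | z ≠ 0}}

/-- power map -/
def pw (p q : ℕ) : (Fin q → ℂ) → (Fin q → ℂ) := fun g i => g i ^ p

lemma continuous_pw (p q : ℕ) : Continuous (pw p q) :=
  continuous_pi fun i => (continuous_apply i).pow p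

lemma ne_zero_of_good {p q : ℕ} (hp : p.Prime) {g : Fin q → ℂ} (hg : pw p q g ∈ good q) (i) :
    g i ≠ 0 := by
  intro h
  exact hg.2 i (by simp [pw, h, hp.ne_zero])

lemma ext_inj {p q : ℕ} (hp : p.Prime) {g : Fin q → ℂ} (hg : pw p q g ∈ good q) :
    Function.Injective (ext p g) := by
  intro a b hab
  have hz := zt_prim hp
  apply finProdFinEquiv.symm.injective
  have h1 : (finProdFinEquiv.symm a).2 = (finProdFinEquiv.symm b).2 := by
    apply hg.1
    have := congrArg (· ^ p) hab
    have hpow : ∀ m : ℕ, (zt p ^ m) ^ p = 1 := fun m => by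
      rw [← pow_mul, mul_comm, pow_mul, hz.pow_eq_one, one_pow]
    simp only [ext, mul_pow, hpow, one_mul] at this
    exact this
  refine Prod.ext (Fin.ext ?_) h1
  unfold ext at hab
  rw [h1] at hab
  exact hz.pow_inj (Fin.is_lt _) (Fin.is_lt _) (mul_right_cancel₀ (ne_zero_of_good hp hg _) hab)

lemma mem_range_ext {p q : ℕ} (hp : p.Prime) {g : Fin q → ℂ} (hg : pw p q g ∈ good q) (z : ℂ) :
    (∃ k, ext p g k = z) ↔ ∃ i, g i ^ p = z ^ p := by
  have hz := zt_prim hp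
  constructor
  · rintro ⟨k, rfl⟩
    exact ⟨(finProdFinEquiv.symm k).2, by
      simp only [ext, mul_pow, ← pow_mul, mul_comm _ p]
      simp [pow_mul, hz.pow_eq_one]⟩
  · rintro ⟨i, hi⟩
    have h0 := ne_zero_of_good hp hg i
    have : NeZero p := ⟨hp.ne_zero⟩
    have h1 : (z / g i) ^ p = 1 := by
      rw [div_pow, hi, div_self]
      rw [← hi]; exact pow_ne_zero _ h0
    obtain ⟨j, hj, hj'⟩ := hz.eq_pow_of_pow_eq_one h1
    refine ⟨finProdFinEquiv (⟨j, hj⟩, i), ?_⟩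
    simp only [ext, Equiv.symm_apply_apply]
    rw [hj', div_mul_cancel₀ _ h0]

lemma exists_sel {p q : ℕ} (hp : p.Prime) {f : Fin (p * q) → ℂ} (hf : Function.Injective f) :
    ∃ s : Fin q → Fin (p * q), pw p q (f ∘ s) ∈ good q := by
  classical
  set R : Finset ℂ := (Finset.univ.image f).erase 0 with hR
  set T : Finset ℂ := R.image (· ^ p) with hT
  have h1 : p * q - 1 ≤ R.card := by
    have := Finset.pred_card_le_card_erase (s := Finset.univ.image f) (a := 0)
    rwa [Finset.card_image_of_injective _ hf, Finset.card_univ, Fintype.card_fin] at this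
  have h2 : R.card ≤ p * T.card := by
    refine Finset.card_le_mul_card_image R p fun b _ => ?_
    calc _ ≤ (Polynomial.nthRoots p b).toFinset.card := by
          refine Finset.card_le_card fun x hx => ?_
          rw [Multiset.mem_toFinset, Polynomial.mem_nthRoots hp.pos]
          exact (Finset.mem_filter.mp hx).2
      _ ≤ _ := (Multiset.toFinset_card_le _).trans (Polynomial.card_nthRoots p b)
  have h3 : q ≤ T.card := by
    by_contra! hlt
    have h4 : p * (T.card + 1) ≤ p * q := Nat.mul_le_mul_left _ hlt
    have := hp.two_le
    rw [mul_add] at h4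
    omega
  have hsel : ∀ a : Fin q, ∃ k, f k ≠ 0 ∧ f k ^ p = (T.equivFin.symm (Fin.castLE h3 a) : ℂ) := by
    intro a
    have := (T.equivFin.symm (Fin.castLE h3 a)).2
    obtain ⟨x, hx, hx'⟩ := Finset.mem_image.mp this
    obtain ⟨hx0, hx1⟩ := Finset.mem_erase.mp hx
    obtain ⟨k, _, rfl⟩ := Finset.mem_image.mp hx1
    exact ⟨k, hx0, hx'⟩
  choose s hs0 hs using hsel
  refine ⟨s, fun a b hab => ?_, fun i => pow_ne_zero _ (hs0 i)⟩
  simp only [pw, Function.comp, hs] at hab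
  exact Fin.castLE_injective h3 (T.equivFin.symm.injective (Subtype.ext hab))

lemma isOpen_good (q : ℕ) : IsOpen (good q) := by
  have : good q = (⋂ a : Fin q, ⋂ b : Fin q, {f | a ≠ b → f a ≠ f b}) ∩ ⋂ a, {f | f a ≠ 0} := by
    ext f
    simp only [good, Set.mem_ofPred_eq, Set.mem_inter_iff, Set.mem_iInter]
    refine and_congr_left fun _ => ?_
    exact ⟨fun h a b hab => h.ne hab, fun h a b hab => by_contra fun hn => h a b hn hab⟩
  rw [this]
  refine IsOpen.inter ?_ ?_
  · refine isOpen_iInter_of_finite fun a => isOpen_iInter_of_finite fun b => ?_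
    by_cases h : a = b
    · simp [h]
    · simp only [ne_eq, h, not_false_eq_true, true_imp_iff]
      exact isOpen_ne_fun (continuous_apply a) (continuous_apply b)
  · exact isOpen_iInter_of_finite fun a => isOpen_ne_fun (continuous_apply a) continuous_const

lemma isOpenMap_pow {p : ℕ} (hp : p.Prime) : IsOpenMap (fun z : ℂ => z ^ p) := by
  have h : AnalyticOnNhd ℂ (fun z : ℂ => z ^ p) Set.univ := fun z _ => by fun_prop
  rcases h.is_constant_or_isOpen isPreconnected_univ with ⟨w, hw⟩ | h
  · have h0 := hw 0 trivial
    have h1 := hw 1 trivial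
    simp [hp.ne_zero] at h0 h1
    rw [← h0] at h1
    exact absurd h1 one_ne_zero
  · exact fun s hs => h s (Set.subset_univ _) hs

lemma pw_surj {p : ℕ} (hp : p.Prime) (q : ℕ) : Function.Surjective (pw p q) := fun f => by
  choose g hg using fun i => IsAlgClosed.exists_pow_nat_eq (f i) hp.pos
  exact ⟨g, funext hg⟩

lemma isOpenMap_pw {p : ℕ} (hp : p.Prime) (q : ℕ) : IsOpenMap (pw p q) :=
  IsOpenMap.piMap (fun _ => isOpenMap_pow hp) (by simp)

/-- map to `C_q` -/
def A (p q : ℕ) (g : pw p q ⁻¹' good q) : UConfig q {z : ℂ | z ≠ 0} :=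
  Quot.mk _ ((good q).restrictPreimage (pw p q) g)

lemma A_quot {p : ℕ} (hp : p.Prime) (q : ℕ) : IsQuotientMap (A p q) := by
  refine IsQuotientMap.comp (g := Quot.mk (permRel q {z : ℂ | z ≠ 0})) isQuotientMap_quot_mk ?_
  refine IsOpenMap.isQuotientMap ((isOpenMap_pw hp q).restrictPreimage _)
    ((continuous_pw p q).restrictPreimage) ?_
  exact (good q).restrictPreimage_surjective (pw_surj hp q)

/-- ordered lift -/
noncomputable def E {p : ℕ} (hp : p.Prime) (q : ℕ) (g : pw p q ⁻¹' good q) :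
    OrdConfig (p * q) Set.univ :=
  ⟨ext p g.1, ext_inj hp g.2, fun _ => trivial⟩

lemma E_mem {p : ℕ} (hp : p.Prime) (q : ℕ) (g : pw p q ⁻¹' good q) :
    Quot.mk _ (E hp q g) ∈ zetaFixed p (p * q) := by
  rw [mem_zetaFixed hp]
  intro k
  refine (mem_range_ext hp g.2 _).mpr ?_
  obtain ⟨i, hi⟩ := (mem_range_ext hp g.2 _).mp ⟨k, rfl⟩
  refine ⟨i, ?_⟩
  rw [mul_pow, (zt_prim hp).pow_eq_one, one_mul]
  exact hi

/-- map to the fixed points -/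
noncomputable def B {p : ℕ} (hp : p.Prime) (q : ℕ) (g : pw p q ⁻¹' good q) :
    zetaFixed p (p * q) := ⟨Quot.mk _ (E hp q g), E_mem hp q g⟩

lemma B_cont {p : ℕ} (hp : p.Prime) (q : ℕ) : Continuous (B hp q) := by
  refine Continuous.subtype_mk (continuous_quot_mk.comp ?_) _
  refine Continuous.subtype_mk ?_ _
  refine continuous_pi fun k => ?_
  unfold ext
  exact continuous_const.mul ((continuous_apply _).comp continuous_subtype_val)

lemma A_eq_iff {p : ℕ} (hp : p.Prime) (q : ℕ) (g g' : pw p q ⁻¹' good q) :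
    A p q g = A p q g' ↔ B hp q g = B hp q g' := by
  refine (mk_eq_range _ _).trans (Iff.trans ?_
    (Subtype.ext_iff.trans (mk_eq_range (E hp q g) (E hp q g'))).symm)
  rw [Set.ext_iff, Set.ext_iff]
  have h1 : ∀ (g : pw p q ⁻¹' good q) (z : ℂ), z ∈ Set.range (E hp q g).1 ↔
      z ^ p ∈ Set.range ((good q).restrictPreimage (pw p q) g).1 :=
    fun g z => mem_range_ext hp g.2 z
  simp only [h1]
  constructor
  · exact fun h z => h _
  · intro h w
    obtain ⟨z, rfl⟩ := IsAlgClosed.exists_pow_nat_eq w hp.pos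
    exact h z

lemma sel_eq {p q : ℕ} (hp : p.Prime) (f : OrdConfig (p * q) Set.univ)
    (hf : Quot.mk _ f ∈ zetaFixed p (p * q)) (s : Fin q → Fin (p * q))
    (hs : pw p q (f.1 ∘ s) ∈ good q) :
    B hp q ⟨f.1 ∘ s, hs⟩ = ⟨Quot.mk _ f, hf⟩ := by
  apply Subtype.ext
  refine (mk_eq_of_subset f _ ?_).symm
  rw [mem_zetaFixed hp] at hf
  intro k
  have : ∀ m : ℕ, ∀ i, ∃ j, f.1 j = zt p ^ m * f.1 i := by
    intro m
    induction m with
    | zero => exact fun i => ⟨i, by simp⟩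
    | succ m ih =>
      intro i
      obtain ⟨j, hj⟩ := ih i
      obtain ⟨l, hl⟩ := hf j
      exact ⟨l, by rw [hl, hj]; ring⟩
  exact this _ _

lemma B_quot {p : ℕ} (hp : p.Prime) (q : ℕ) : IsQuotientMap (B hp q) := by
  set Z := zetaFixed p (p * q) with hZ
  let P := Z.restrictPreimage (Quot.mk (permRel (p * q) Set.univ))
  have hP : IsQuotientMap P :=
    IsOpenMap.isQuotientMap ((isOpenMap_mk _ _).restrictPreimage _)
      (continuous_quot_mk.restrictPreimage)
      (Z.restrictPreimage_surjective Quot.mk_surjective)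
  have hsel : ∀ (f : Quot.mk (permRel (p * q) Set.univ) ⁻¹' Z) (s : Fin q → Fin (p * q))
    (hs : pw p q (f.1.1 ∘ s) ∈ good q), B hp q ⟨f.1.1 ∘ s, hs⟩ = P f :=
    fun f s hs => sel_eq hp f.1 f.2 s hs
  refine isQuotientMap_iff_isClosed.mpr ?_
  suffices hs : Function.Surjective (B hp q) ∧
      ∀ U : Set (zetaFixed p (p * q)), IsOpen (B hp q ⁻¹' U) → IsOpen U by
    refine ⟨hs.1, fun C => ⟨fun h => h.preimage (B_cont hp q), fun h => ?_⟩⟩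
    rw [← isOpen_compl_iff] at h ⊢
    exact hs.2 _ h
  refine ⟨?_, fun U h => ?_⟩
  · intro c
    obtain ⟨f, rfl⟩ := hP.surjective c
    obtain ⟨s, hs⟩ := exists_sel (q := q) hp f.1.2.1
    exact ⟨_, hsel f s hs⟩
  · rw [← hP.isOpen_preimage]
    have hG : IsOpen (pw p q ⁻¹' good q) := (isOpen_good q).preimage (continuous_pw p q)
    have hV := hG.isOpenMap_subtype_val _ h
    have : P ⁻¹' U = ⋃ s : Fin q → Fin (p * q),
        (fun f : Quot.mk (permRel (p * q) Set.univ) ⁻¹' Z => f.1.1 ∘ s) ⁻¹'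
          (Subtype.val '' (B hp q ⁻¹' U)) := by
      ext f
      simp only [Set.mem_preimage, Set.mem_iUnion, Set.mem_image]
      constructor
      · intro hf
        obtain ⟨s, hs⟩ := exists_sel (q := q) hp f.1.2.1
        exact ⟨s, ⟨_, hs⟩, by rw [hsel f s hs]; exact hf, rfl⟩
      · rintro ⟨s, ⟨g, hg⟩, hgU, rfl⟩
        rw [hsel f s hg] at hgU
        exact hgU
    rw [this]
    refine isOpen_iUnion fun s => hV.preimage ?_
    exact continuous_pi fun i => (continuous_apply _).comp
      (continuous_subtype_val.comp continuous_subtype_val)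

end ZetaAux

/-- For a prime `p`, `q ≥ 1` and `n = pq`, the fixed-point subspace `C_n(ℂ)^{ℤ/p}` (with
the subspace topology) is homeomorphic to the unordered configuration space
`C_q(ℂ∖{0})` of `q` points in the punctured plane. -/
theorem zetaFixed_homeo_config_punctured (p q : ℕ) (hp : p.Prime) (hq : 1 ≤ q) :
    Nonempty (↥(zetaFixed p (p * q)) ≃ₜ UConfig q {z : ℂ | z ≠ 0}) := by
  have hA := ZetaAux.A_quot hp q
  have hB := ZetaAux.B_quot hp q
  have hk : Setoid.ker (ZetaAux.A p q) = Setoid.ker (ZetaAux.B hp q) :=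
    Setoid.ext fun g g' => ZetaAux.A_eq_iff hp q g g'
  have e1 := IsQuotientMap.homeomorph (f := ⟨ZetaAux.A p q, hA.continuous⟩) hA
  have e2 := IsQuotientMap.homeomorph (f := ⟨ZetaAux.B hp q, hB.continuous⟩) hB
  change Quotient (Setoid.ker (ZetaAux.A p q)) ≃ₜ _ at e1
  change Quotient (Setoid.ker (ZetaAux.B hp q)) ≃ₜ _ at e2
  rw [hk] at e1
  exact ⟨e2.symm.trans e1⟩
end
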